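/- For every i ∈ Σ_{n+1} and every • ∈ {A, D}, one has |GP(i)| ≥ |GP(C_•(i))| + n. Moreover, if ind_A(i) · ind_D(i) > 0, then the inequality is strict for at least one • ∈ {A, D}. -/

import Mathlib

open scoped Classical

noncomputable section

namespace StringPolytope

/-! ### Words, reduced words, two-moves -/

/-- the simple transposition `s_a = (a, a+1)` acting on `ℕ` (wires are `1, …, n+1`). -/
def sTrans (a : ℕ) : Equiv.Perm ℕ := Equiv.swap a (a + 1)

/-- product `s_{i₁} ⋯ s_{i_N}` of the simple transpositions of a word. -/
def wordProd (w : List ℕ) : Equiv.Perm ℕ := (w.map sTrans).prod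

/-- the longest element `w₀` of the symmetric group on `{1, …, n+1}`,
sending `k ↦ n + 2 - k` there and fixing everything else. -/
def longestPerm (n : ℕ) : Equiv.Perm ℕ :=
  Function.Involutive.toPerm
    (fun k => if 1 ≤ k ∧ k ≤ n + 1 then n + 2 - k else k)
    (by intro k; dsimp only; split_ifs <;> omega)

/-- `w ∈ Σ_{n+1}`: a reduced word of the longest element of `S_{n+1}`,
i.e. a word over `[n] = {1,…,n}` of length `N = n(n+1)/2` whose product is `w₀`. -/
def IsReduced (n : ℕ) (w : List ℕ) : Prop :=
  w.length = n * (n + 1) / 2 ∧ (∀ a ∈ w, 1 ≤ a ∧ a ≤ n) ∧ wordProd w = longestPerm n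

/-- a single 2-move: exchange two adjacent letters `(a, b)` with `|a - b| > 1`. -/
def TwoMoveStep (w w' : List ℕ) : Prop :=
  ∃ u v a b, (a + 1 < b ∨ b + 1 < a) ∧ w = u ++ a :: b :: v ∧ w' = u ++ b :: a :: v

/-- 2-move equivalence of words. -/
def TwoMoveEquiv : List ℕ → List ℕ → Prop := Relation.ReflTransGen TwoMoveStep

/-- `A_n = (1, 2, …, n)`. -/
def ascWord (n : ℕ) : List ℕ := (List.range n).map (· + 1)

/-- `D_n = (n, n-1, …, 1)`. -/
def descWord (n : ℕ) : List ℕ := (ascWord n).reverse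

/-! ### The wiring diagram -/

/-- the letter `i_j` of `w` (1-based index `j`); the node `t_j` lies in column `i_j`. -/
def letterAt (w : List ℕ) (j : ℕ) : ℕ := w.getD (j - 1) 0

/-- `1 ≤ j ≤ N`: `t_j` is an actual node of the diagram. -/
def ValidNode (w : List ℕ) (j : ℕ) : Prop := 1 ≤ j ∧ j ≤ w.length

/-- the column-to-wire assignment just above node `t_j`
(at the top of the diagram, wire `k` is in column `k`). -/
def stateAbove (w : List ℕ) (j : ℕ) : Equiv.Perm ℕ := wordProd (w.take (j - 1))

/-- the column-to-wire assignment just below node `t_j`. -/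
def stateBelow (w : List ℕ) (j : ℕ) : Equiv.Perm ℕ := wordProd (w.take j)

/-- one of the two wires crossing at node `t_j` (the one leaving upward-left). -/
def wireX (w : List ℕ) (j : ℕ) : ℕ := stateAbove w j (letterAt w j)

/-- the other wire crossing at node `t_j` (the one leaving upward-right). -/
def wireY (w : List ℕ) (j : ℕ) : ℕ := stateAbove w j (letterAt w j + 1)

/-- the node `t_j` lies on the wire `ℓ_r`. -/
def NodeOnWire (w : List ℕ) (j r : ℕ) : Prop := wireX w j = r ∨ wireY w j = r

/-- given one wire `r` at node `t_j`, the other wire crossing there. -/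
def otherWire (w : List ℕ) (j r : ℕ) : ℕ := if wireX w j = r then wireY w j else wireX w j

/-- the column of wire `ℓ_r` at the height of node `t_j`. -/
def wireCol (w : List ℕ) (j r : ℕ) : ℕ := (stateBelow w j).symm r

/-- node `t_j` lies strictly below the wire `ℓ_{n+1}`
(which runs from the bottom-left corner to the top-right corner). -/
def BelowWireLast (n : ℕ) (w : List ℕ) (j : ℕ) : Prop :=
  wireCol w j (n + 1) < letterAt w j

/-- node `t_j` lies strictly above the wire `ℓ_{n+1}`. -/
def AboveWireLast (n : ℕ) (w : List ℕ) (j : ℕ) : Prop :=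
  letterAt w j + 1 < wireCol w j (n + 1)

/-- node `t_j` lies strictly below the wire `ℓ_1`
(which runs from the bottom-right corner to the top-left corner). -/
def BelowWireOne (w : List ℕ) (j : ℕ) : Prop :=
  letterAt w j + 1 < wireCol w j 1

/-- node `t_j` lies strictly above the wire `ℓ_1`. -/
def AboveWireOne (w : List ℕ) (j : ℕ) : Prop :=
  wireCol w j 1 < letterAt w j

/-! ### Rigorous (Gleizer–Postnikov) paths

A path in `G(i, k)` is encoded by `k` together with the list of its switching
nodes, in order of travel.  Wires `ℓ_1, …, ℓ_k` are oriented upward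
(decreasing node index) and the remaining wires downward. -/

/-- the (1-based indices of the) nodes lying on wire `ℓ_r`, in order of increasing index. -/
def nodesOn (w : List ℕ) (r : ℕ) : List ℕ :=
  ((List.range w.length).map (· + 1)).filter (fun j => decide (NodeOnWire w j r))

/-- nodes on wire `ℓ_r` strictly between the nodes `t_a` and `t_b`. -/
def segList (w : List ℕ) (r a b : ℕ) : List ℕ :=
  (nodesOn w r).filter (fun j => decide (min a b < j ∧ j < max a b))

/-- nodes on wire `ℓ_r` strictly below the node `t_a`. -/
def tailList (w : List ℕ) (r a : ℕ) : List ℕ :=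
  (nodesOn w r).filter (fun j => decide (a < j))

/-- a forbidden fragment of `G(i, k)`: the path passes straight through node `t_j`
travelling along the wire `ℓ_r`, where the other wire `ℓ_b` crossing there has the same
orientation as `ℓ_r` and (`r < b` if both upward, `r > b` if both downward). -/
def Forbidden (w : List ℕ) (k j r : ℕ) : Prop :=
  (r ≤ k ∧ otherWire w j r ≤ k ∧ r < otherWire w j r) ∨
  (k < r ∧ k < otherWire w j r ∧ otherWire w j r < r)

/-- travelling in `G(i,k)`: currently on wire `ℓ_r` at node `t_a` (just switched there),
with future switching nodes `ms`; the travel is legal and ends at `L_{k+1}`. -/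
def TravelOK (w : List ℕ) (k : ℕ) : ℕ → ℕ → List ℕ → Prop
  | r, a, [] => r = k + 1 ∧ ∀ j ∈ tailList w r a, ¬ Forbidden w k j r
  | r, a, m :: ms =>
      ValidNode w m ∧ NodeOnWire w m r ∧
      (if r ≤ k then m < a else a < m) ∧
      (∀ j ∈ segList w r a m, ¬ Forbidden w k j r) ∧
      TravelOK w k (otherWire w m r) m ms

/-- all nodes visited after the switch at node `t_a` onto wire `ℓ_r`. -/
def visitTail (w : List ℕ) : ℕ → ℕ → List ℕ → List ℕ
  | r, a, [] => tailList w r a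
  | r, a, m :: ms => segList w r a m ++ m :: visitTail w (otherWire w m r) m ms

/-- the list of all nodes visited by the path (switching nodes and straight passes). -/
def visitList (w : List ℕ) (k : ℕ) : List ℕ → List ℕ
  | [] => []
  | m :: ms => tailList w k m ++ m :: visitTail w (otherWire w m k) m ms

/-- `(k, ms)` encodes a rigorous (Gleizer–Postnikov) path in `G(i, k)`:
it starts at `L_k` going up the wire `ℓ_k`, switches wires exactly at the nodes
listed in `ms`, respects the orientation, ends at `L_{k+1}`, contains no forbidden
fragment and passes through each node at most once. -/
def IsGPPath (n : ℕ) (w : List ℕ) (k : ℕ) (ms : List ℕ) : Prop :=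
  1 ≤ k ∧ k ≤ n ∧
  (match ms with
   | [] => False
   | m :: rest =>
       ValidNode w m ∧ NodeOnWire w m k ∧
       (∀ j ∈ tailList w k m, ¬ Forbidden w k j k) ∧
       TravelOK w k (otherWire w m k) m rest) ∧
  (visitList w k ms).Nodup

/-- the set `GP(i)` of all rigorous paths of `G(i)`. -/
def GP (n : ℕ) (w : List ℕ) : Set (ℕ × List ℕ) := {p | IsGPPath n w p.1 p.2}

/-- `|GP(i)|`, the number of rigorous paths. -/
def numGP (n : ℕ) (w : List ℕ) : ℕ := (GP n w).ncard

/-- the successive switches of a path: `(node, from-wire, to-wire)`. -/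
def pathSwitches (w : List ℕ) : ℕ → List ℕ → List (ℕ × ℕ × ℕ)
  | _, [] => []
  | r, m :: ms => (m, r, otherWire w m r) :: pathSwitches w (otherWire w m r) ms

/-- the wire-expression of a path: the successive wires travelled. -/
def wireSeq (w : List ℕ) : ℕ → List ℕ → List ℕ
  | r, [] => [r]
  | r, m :: ms => r :: wireSeq w (otherWire w m r) ms

/-- the peaks of a path: switching nodes where the path switches from an
upward wire to a downward wire. -/
def peaks (w : List ℕ) (k : ℕ) (ms : List ℕ) : List ℕ :=
  ((pathSwitches w k ms).filter (fun e => decide (e.2.1 ≤ k ∧ k < e.2.2))).map (·.1)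

/-! ### String cone, `λ`-cone, string polytope -/

/-- `N = n(n+1)/2`, the number of nodes. -/
abbrev Dim (n : ℕ) : ℕ := n * (n + 1) / 2

/-- the coefficient `a_j` of `t_j` in the string inequality of the path `(k, ms)`:
`+1` if the path switches at `t_j` from `ℓ_r` to `ℓ_s` with `r < s`,
`-1` if it switches with `r > s`, and `0` otherwise. -/
def coeff (w : List ℕ) (k : ℕ) (ms : List ℕ) (j : ℕ) : ℝ :=
  ((pathSwitches w k ms).map (fun e =>
    if e.1 = j then (if e.2.1 < e.2.2 then (1 : ℝ) else -1) else 0)).sum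

/-- the (primitive inward normal) coefficient vector of the string inequality of a path. -/
def normalVec (n : ℕ) (w : List ℕ) (p : ℕ × List ℕ) : Fin (Dim n) → ℝ :=
  fun j => coeff w p.1 p.2 ((j : ℕ) + 1)

/-- the left-hand side `∑ a_j t_j` of the string inequality of the path `p`. -/
def stringIneq (n : ℕ) (w : List ℕ) (p : ℕ × List ℕ) (t : Fin (Dim n) → ℝ) : ℝ :=
  ∑ j : Fin (Dim n), normalVec n w p j * t j

/-- the string cone `C_i ⊆ ℝ^N`. -/
def stringCone (n : ℕ) (w : List ℕ) : Set (Fin (Dim n) → ℝ) :=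
  {t | ∀ p ∈ GP n w, 0 ≤ stringIneq n w p t}

/-- the polyhedron cut out by all string inequalities except the one of `p₀`. -/
def stringConeExcept (n : ℕ) (w : List ℕ) (p₀ : ℕ × List ℕ) : Set (Fin (Dim n) → ℝ) :=
  {t | ∀ p ∈ GP n w, p ≠ p₀ → 0 ≤ stringIneq n w p t}

/-- the coefficient `a_k` in the `λ`-inequality of node `t_j`:
`1` if `t_k` is one column left or right of `t_j`, `-2` if in the same column. -/
def lamCoeff (w : List ℕ) (j k : ℕ) : ℝ :=
  if letterAt w k = letterAt w j then -2
  else if letterAt w k = letterAt w j + 1 ∨ letterAt w k + 1 = letterAt w j then 1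
  else 0

/-- the `λ`-inequality of node `t_{j+1}`:
`t_j ≤ λ_{i_j} + ∑_{k > j} a_k t_k`. -/
def LamIneq (n : ℕ) (w : List ℕ) (lam : ℕ → ℤ) (j : Fin (Dim n)) (t : Fin (Dim n) → ℝ) : Prop :=
  t j ≤ (lam (letterAt w ((j : ℕ) + 1)) : ℝ) +
    ∑ k : Fin (Dim n),
      (if (j : ℕ) < (k : ℕ) then lamCoeff w ((j : ℕ) + 1) ((k : ℕ) + 1) else 0) * t k

/-- the `λ`-cone `C_i^λ ⊆ ℝ^N`. -/
def lamCone (n : ℕ) (w : List ℕ) (lam : ℕ → ℤ) : Set (Fin (Dim n) → ℝ) :=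
  {t | ∀ j, LamIneq n w lam j t}

/-- the polyhedron cut out by all `λ`-inequalities except the one of `j₀`. -/
def lamConeExcept (n : ℕ) (w : List ℕ) (lam : ℕ → ℤ) (j₀ : Fin (Dim n)) :
    Set (Fin (Dim n) → ℝ) :=
  {t | ∀ j, j ≠ j₀ → LamIneq n w lam j t}

/-- the string polytope `Δ_i(λ) = C_i ∩ C_i^λ`. -/
def stringPolytope (n : ℕ) (w : List ℕ) (lam : ℕ → ℤ) : Set (Fin (Dim n) → ℝ) :=
  stringCone n w ∩ lamCone n w lam

/-- `λ = λ_1 ϖ_1 + ⋯ + λ_n ϖ_n` is a dominant integral weight: all `λ_j ≥ 0`. -/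
def Dominant (n : ℕ) (lam : ℕ → ℤ) : Prop := ∀ j, 1 ≤ j → j ≤ n → 0 ≤ lam j

/-- `λ` is a regular dominant integral weight: all `λ_j > 0`. -/
def RegularDominant (n : ℕ) (lam : ℕ → ℤ) : Prop := ∀ j, 1 ≤ j → j ≤ n → 0 < lam j

/-! ### Unimodular equivalence, Gelfand–Cetlin polytope, facets -/

/-- `P` and `Q` are unimodularly equivalent: `Q = M(P) + v` with `M ∈ GL(m, ℤ)`, `v ∈ ℤ^m`. -/
def UnimodEquiv {m : ℕ} (P Q : Set (Fin m → ℝ)) : Prop :=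
  ∃ (M : Matrix (Fin m) (Fin m) ℤ) (v : Fin m → ℤ), IsUnit M.det ∧
    Q = (fun x i => (∑ j, (M i j : ℝ) * x j) + (v i : ℝ)) '' P

/-- the entry `x_{k,j}` (`1 ≤ j ≤ k ≤ n+1`) of a Gelfand–Cetlin pattern, where the
top row is `x_{n+1,j} = λ_j + ⋯ + λ_n` and `x_{n+1,n+1} = 0`; the pair `(k, j)` is
encoded as the coordinate `k(k-1)/2 + (j-1)` of `ℝ^N`. -/
def gcX (n : ℕ) (lam : ℕ → ℤ) (x : Fin (Dim n) → ℝ) (k j : ℕ) : ℝ :=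
  if k = n + 1 then (if j ≤ n then ∑ t ∈ Finset.Icc j n, (lam t : ℝ) else 0)
  else if h : k * (k - 1) / 2 + (j - 1) < Dim n then x ⟨k * (k - 1) / 2 + (j - 1), h⟩ else 0

/-- the Gelfand–Cetlin polytope `GC(λ) ⊆ ℝ^N`. -/
def GCPolytope (n : ℕ) (lam : ℕ → ℤ) : Set (Fin (Dim n) → ℝ) :=
  {x | ∀ k j, 1 ≤ k → k ≤ n → 1 ≤ j → j ≤ k →
      gcX n lam x k j ≤ gcX n lam x (k + 1) j ∧
      gcX n lam x (k + 1) (j + 1) ≤ gcX n lam x k j}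

/-- a face of a convex set: a convex extreme subset. -/
def IsFaceSet {m : ℕ} (S F : Set (Fin m → ℝ)) : Prop := IsExtreme ℝ S F ∧ Convex ℝ F

/-- a facet: a maximal proper face. -/
def IsFacet {m : ℕ} (S F : Set (Fin m → ℝ)) : Prop :=
  IsFaceSet S F ∧ F ≠ S ∧ ∀ G, IsFaceSet S G → G ≠ S → F ⊆ G → F = G

/-- the number of facets. -/
def numFacets {m : ℕ} (S : Set (Fin m → ℝ)) : ℕ := {F | IsFacet S F}.ncard

/-- combinatorial equivalence: an inclusion-preserving bijection between face lattices. -/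
def CombEquiv {m : ℕ} (S T : Set (Fin m → ℝ)) : Prop :=
  ∃ e : {F // IsFaceSet S F} ≃ {F // IsFaceSet T F},
    ∀ F G : {F // IsFaceSet S F}, F.1 ⊆ G.1 ↔ (e F).1 ⊆ (e G).1

/-! ### Indices, contractions and extensions -/

/-- the `D`-index `ind_D(i) = |i_D^+|` for a decomposition `i ∼ i_D^- D_n i_D^+`
(independent of the decomposition). -/
def indD (n : ℕ) (w : List ℕ) : ℕ :=
  sInf {s | ∃ u v : List ℕ, v.length = s ∧ TwoMoveEquiv w (u ++ descWord n ++ v)}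

/-- the `A`-index `ind_A(i) = |i_A^+|` for a decomposition `i ∼ i_A^- A_n i_A^+`. -/
def indA (n : ℕ) (w : List ℕ) : ℕ :=
  sInf {s | ∃ u v : List ℕ, v.length = s ∧ TwoMoveEquiv w (u ++ ascWord n ++ v)}

/-- `w'` is a `D`-contraction `C_D(w) = i_D^- (i_D^+ - 1)` of `w ∈ Σ_{n+1}`. -/
def IsContractionD (n : ℕ) (w w' : List ℕ) : Prop :=
  ∃ u v : List ℕ, TwoMoveEquiv w (u ++ descWord n ++ v) ∧ w' = u ++ v.map (· - 1)

/-- `w'` is an `A`-contraction `C_A(w) = (i_A^- - 1) i_A^+` of `w ∈ Σ_{n+1}`. -/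
def IsContractionA (n : ℕ) (w w' : List ℕ) : Prop :=
  ∃ u v : List ℕ, TwoMoveEquiv w (u ++ ascWord n ++ v) ∧ w' = u.map (· - 1) ++ v

/-- the `D`-extension `E_D(s) : Σ_{n+1} → Σ_{n+2}`,
`i = i^-(s) i^+(s) ↦ i^-(s) D_{n+1} (i^+(s) + 1)` where `|i^+(s)| = s`. -/
def extD (n : ℕ) (s : ℕ) (w : List ℕ) : List ℕ :=
  w.take (w.length - s) ++ descWord (n + 1) ++ (w.drop (w.length - s)).map (· + 1)

/-- the `A`-extension `E_A(s) : Σ_{n+1} → Σ_{n+2}`,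
`i = i^-(s) i^+(s) ↦ (i^-(s) + 1) A_{n+1} i^+(s)`. -/
def extA (n : ℕ) (s : ℕ) (w : List ℕ) : List ℕ :=
  (w.take (w.length - s)).map (· + 1) ++ ascWord (n + 1) ++ w.drop (w.length - s)

/-- there exists `(σ_1, …, σ_n) ∈ {A, D}^n` (here `true = D`, `false = A`) such that
`ind_{σ_k}(C_{σ_{k+1}} ∘ ⋯ ∘ C_{σ_n}(i)) = 0` for all `k = n, …, 1`. -/
def SimplicialWord (n : ℕ) (w : List ℕ) : Prop :=
  ∃ (σ : ℕ → Bool) (c : ℕ → List ℕ), c n = w ∧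
    ∀ k, 1 ≤ k → k ≤ n →
      (if σ k then IsContractionD k (c k) (c (k - 1)) ∧ indD k (c k) = 0
       else IsContractionA k (c k) (c (k - 1)) ∧ indA k (c k) = 0)


/-- the `D`-coindex `coind_D(i) = |i_D^-|`. -/
def coindD (n : ℕ) (w : List ℕ) : ℕ :=
  sInf {s | ∃ u v : List ℕ, u.length = s ∧ TwoMoveEquiv w (u ++ descWord n ++ v)}

/-- the `A`-coindex `coind_A(i) = |i_A^-|`. -/
def coindA (n : ℕ) (w : List ℕ) : ℕ :=
  sInf {s | ∃ u v : List ℕ, u.length = s ∧ TwoMoveEquiv w (u ++ ascWord n ++ v)}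

/-- the `a`-th (0-based) coordinate of a point of `ℝ^N`. -/
def entry (n : ℕ) (t : Fin (Dim n) → ℝ) (a : ℕ) : ℝ :=
  if h : a < Dim n then t ⟨a, h⟩ else 0

/-- the product of cones
`t_1 ≥ 0`, `t_2 ≥ t_3 ≥ 0`, …, `t_{N-n+1} ≥ ⋯ ≥ t_N ≥ 0` (in `ℝ^N`, 1-based:
for `k = 1, …, n` the chain `t_{k(k-1)/2+1} ≥ ⋯ ≥ t_{k(k-1)/2+k} ≥ 0`). -/
def chainCone (n : ℕ) : Set (Fin (Dim n) → ℝ) :=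
  {t | ∀ k j, 1 ≤ k → k ≤ n → 1 ≤ j → j ≤ k →
    (if j = k then 0 else entry n t (k * (k - 1) / 2 + j)) ≤
      entry n t (k * (k - 1) / 2 + (j - 1))}

/-! ### Abstract arrangements -/

/-- axioms of the crossing-height function of an arrangement of wires `1, …, n+1`;
`T r 0` is the height of the lower endpoint. -/
structure AX (n : ℕ) (T : ℕ → ℕ → ℕ) : Prop where
  sym : ∀ r s, 1 ≤ r → r ≤ n + 1 → 1 ≤ s → s ≤ n + 1 → T r s = T s r
  bot : ∀ r s, 1 ≤ r → r ≤ n + 1 → 1 ≤ s → s ≤ n + 1 → r ≠ s → T r s < T r 0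
  tri : ∀ a b c, 1 ≤ a → a < b → b < c → c ≤ n + 1 →
    (T a b < T a c ∧ T a c < T b c) ∨ (T b c < T a c ∧ T a c < T a b)

def bef (T : ℕ → ℕ → ℕ) (k r x y : ℕ) : Prop := if r ≤ k then T r y < T r x else T r x < T r y

def fb (k r x : ℕ) : Prop := (r ≤ k ∧ x ≤ k ∧ r < x) ∨ (k < r ∧ k < x ∧ x < r)

def TOK (n : ℕ) (T : ℕ → ℕ → ℕ) (k a r b : ℕ) : Prop :=
  a ≠ r ∧ b ≠ r ∧ bef T k r a b ∧
    ∀ x, 1 ≤ x → x ≤ n + 1 → x ≠ r → bef T k r a x → bef T k r x b → ¬ fb k r x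

def OK3 (P : ℕ → ℕ → ℕ → Prop) : List ℕ → Prop
  | a :: r :: b :: l => P a r b ∧ OK3 P (r :: b :: l)
  | _ => True

def IsP (n : ℕ) (T : ℕ → ℕ → ℕ) (k : ℕ) (c : List ℕ) : Prop :=
  1 ≤ k ∧ k ≤ n ∧ (∀ r ∈ c, 1 ≤ r ∧ r ≤ n + 1) ∧ c.head? = some k ∧
    c.getLast? = some (k + 1) ∧ OK3 (TOK n T k) (0 :: (c ++ [0]))

def PA (n : ℕ) (T : ℕ → ℕ → ℕ) : Set (ℕ × List ℕ) := {p | IsP n T p.1 p.2}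

theorem OK3.mono {P Q : ℕ → ℕ → ℕ → Prop} : ∀ (l : List ℕ),
    (∀ a r b, a ∈ l → r ∈ l → b ∈ l → P a r b → Q a r b) → OK3 P l → OK3 Q l
  | [], _, _ => trivial
  | [_], _, _ => trivial
  | [_, _], _, _ => trivial
  | a :: r :: b :: l, h, hl => by
    refine ⟨h _ _ _ (by simp) (by simp) (by simp) hl.1, ?_⟩
    refine OK3.mono (r :: b :: l) ?_ hl.2
    intro x y z hx hy hz
    exact h x y z (List.mem_cons_of_mem _ hx) (List.mem_cons_of_mem _ hy)
      (List.mem_cons_of_mem _ hz)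

theorem OK3.append {P : ℕ → ℕ → ℕ → Prop} (x y : ℕ) (l' : List ℕ) (h' : OK3 P (x :: y :: l')) :
    ∀ (l : List ℕ), OK3 P (l ++ [x, y]) → OK3 P (l ++ x :: y :: l')
  | [], _ => h'
  | [a], h => ⟨h.1, h'⟩
  | [a, b], h => ⟨h.1, h.2.1, h'⟩
  | a :: b :: c :: l, h => ⟨h.1, OK3.append x y l' h' (b :: c :: l) h.2⟩

/-- reversal of good lists -/
theorem OK3.reverse {P Q : ℕ → ℕ → ℕ → Prop} (f : ℕ → ℕ) : ∀ (l : List ℕ),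
    (∀ a r b, a ∈ l → r ∈ l → b ∈ l → P a r b → Q (f b) (f r) (f a)) → OK3 P l →
      OK3 Q (l.map f).reverse
  | [], _, _ => trivial
  | [_], _, _ => trivial
  | [_, _], _, _ => trivial
  | a :: r :: b :: l, h, hl => by
    have ih := OK3.reverse f (r :: b :: l) (fun x y z hx hy hz =>
      h x y z (List.mem_cons_of_mem _ hx) (List.mem_cons_of_mem _ hy)
      (List.mem_cons_of_mem _ hz)) hl.2
    have := OK3.append (P := Q) (f b) (f r) [f a]
      ⟨h _ _ _ (by simp) (by simp) (by simp) hl.1, trivial⟩ (l.map f).reverse (by simpa using ih)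
    simpa using this

theorem TOK_lift {n T k a r b} (hk : k ≤ n) (hr : r ≤ n + 1) (h : TOK n T k a r b) :
    TOK (n + 1) T k a r b := by
  refine ⟨h.1, h.2.1, h.2.2.1, fun x h1 h2 h3 h4 h5 => ?_⟩
  by_cases hx : x ≤ n + 1
  · exact h.2.2.2 x h1 hx h3 h4 h5
  · unfold fb; omega

theorem PA_lift (n : ℕ) (T) : PA n T ⊆ PA (n + 1) T := by
  rintro ⟨k, c⟩ ⟨h1, h2, h3, h4, h5, h6⟩
  refine ⟨h1, by simp only at *; omega, fun r hr => ⟨(h3 r hr).1, by have := (h3 r hr).2; omega⟩,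
    h4, h5, ?_⟩
  refine OK3.mono _ ?_ h6
  intro a r b _ hr _ h
  refine TOK_lift h2 ?_ h
  simp at hr
  rcases hr with rfl | hr | rfl
  · omega
  · exact (h3 r hr).2
  · omega

/-- the greedy downward path -/
theorem down_path {n T} (ax : AX n T) {k : ℕ} (hk1 : 1 ≤ k) : ∀ (r p : ℕ), k < r → r ≤ n + 1 →
    p ≠ r → 1 ≤ p → p ≤ n + 1 → (r = k + 1 ∨ T r p < T r (k + 1)) →
    ∃ l : List ℕ, (∀ x ∈ l, k < x ∧ x < r) ∧ (r :: l).getLast? = some (k + 1) ∧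
      OK3 (TOK n T k) (p :: r :: (l ++ [0])) := by
  intro r
  induction r using Nat.strong_induction_on with
  | _ r ih =>
  intro p hkr hrn hpr hp1 hpn h
  have hnk : ¬ r ≤ k := by omega
  by_cases hr : r = k + 1
  · refine ⟨[], by simp, by simp [hr], ?_⟩
    refine ⟨⟨hpr, by omega, ?_, ?_⟩, trivial⟩
    · simp only [bef, hnk, if_false]
      exact ax.bot r p (by omega) hrn hp1 hpn (Ne.symm hpr)
    · intro x _ _ _ _ _; unfold fb; omega
  · have h := h.resolve_left hr
    obtain ⟨x, hx, hmin⟩ := Finset.exists_min_image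
      ((Finset.Ioo k r).filter (fun x => T r p < T r x)) (fun x => T r x)
      ⟨k + 1, by simp only [Finset.mem_filter, Finset.mem_Ioo]; omega⟩
    simp only [Finset.mem_filter, Finset.mem_Ioo] at hx hmin
    have hc : x = k + 1 ∨ T x r < T x (k + 1) := by
      by_cases hxk : x = k + 1
      · exact Or.inl hxk
      · right
        have h1 := hmin (k + 1) ⟨by omega, h⟩
        have t := ax.tri (k + 1) x r (by omega) (by omega) hx.1.2 hrn
        have s1 := ax.sym r x (by omega) (by omega) (by omega) (by omega)
        have s2 := ax.sym r (k+1) (by omega) (by omega) (by omega) (by omega)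
        have s3 := ax.sym x (k+1) (by omega) (by omega) (by omega) (by omega)
        omega
    obtain ⟨l, hl1, hl2, hl3⟩ := ih x hx.1.2 r hx.1.1 (by omega) (by omega) (by omega) hrn hc
    refine ⟨x :: l, ?_, ?_, ?_⟩
    · intro y hy
      rcases List.mem_cons.1 hy with rfl | hy
      · exact hx.1
      · have := hl1 y hy; omega
    · rw [List.getLast?_cons_cons]; exact hl2
    · refine ⟨⟨hpr, by omega, ?_, ?_⟩, hl3⟩
      · simp only [bef, hnk, if_false]; exact hx.2
      · intro y hy1 hy2 hy3 hy4 hy5 hf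
        simp only [bef, hnk, if_false] at hy4 hy5
        have := hmin y ⟨by unfold fb at hf; omega, hy4⟩
        omega

/-- the greedy upward path (constructed from its top) -/
theorem up_path {n T} (ax : AX n T) {k : ℕ} (hkn : k ≤ n) : ∀ (d j s : ℕ), k - j = d → 1 ≤ j →
    j ≤ k → s ≠ j → 1 ≤ s → s ≤ n + 1 → (j = k ∨ T j s < T j k) →
    ∃ l : List ℕ, (∀ x ∈ l, j < x ∧ x ≤ k) ∧ (l ++ [j]).head? = some k ∧
      OK3 (TOK n T k) (0 :: (l ++ [j, s])) := by
  intro d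
  induction d using Nat.strong_induction_on with
  | _ d ih =>
  intro j s hd hj1 hjk hsj hs1 hsn h
  by_cases hr : j = k
  · subst hr
    refine ⟨[], by simp, by simp, ?_⟩
    refine ⟨⟨by omega, by omega, ?_, ?_⟩, trivial⟩
    · simp only [bef, hjk, if_true]
      exact ax.bot j s (by omega) (by omega) hs1 hsn (Ne.symm hsj)
    · intro x _ _ _ _ _; unfold fb; omega
  · have h := h.resolve_left hr
    obtain ⟨x, hx, hmin⟩ := Finset.exists_min_image
      ((Finset.Ioc j k).filter (fun x => T j s < T j x)) (fun x => T j x)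
      ⟨k, by simp only [Finset.mem_filter, Finset.mem_Ioc]; omega⟩
    simp only [Finset.mem_filter, Finset.mem_Ioc] at hx hmin
    have hc : x = k ∨ T x j < T x k := by
      by_cases hxk : x = k
      · exact Or.inl hxk
      · right
        have h1 := hmin k ⟨by omega, h⟩
        have t := ax.tri j x k (by omega) (by omega) (by omega) (by omega)
        have s1 := ax.sym j x (by omega) (by omega) (by omega) (by omega)
        omega
    obtain ⟨l, hl1, hl2, hl3⟩ := ih (k - x) (by omega) x j rfl (by omega) (by omega) (by omega)
      (by omega) (by omega) hc
    refine ⟨l ++ [x], ?_, ?_, ?_⟩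
    · intro y hy
      rcases List.mem_append.1 hy with hy | hy
      · have := hl1 y hy; omega
      · simp at hy; omega
    · rw [List.head?_append, hl2]; rfl
    · have := OK3.append (P := TOK n T k) x j [s] ⟨?_, trivial⟩ (0 :: l) hl3
      · simpa using this
      · refine ⟨by omega, hsj, ?_, ?_⟩
        · simp only [bef, hjk, if_true]; exact hx.2
        · intro y hy1 hy2 hy3 hy4 hy5 hf
          simp only [bef, hjk, if_true] at hy4 hy5
          have := hmin y ⟨by unfold fb at hf; omega, hy5⟩
          omega

/-- a path going up `k` and then greedily (from below) down to the wire `x`. -/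
theorem mid_path {n T} (ax : AX n T) {k : ℕ} (hk1 : 1 ≤ k) : ∀ (x s : ℕ), k < x → x ≤ n + 1 →
    s ≠ x → 1 ≤ s → s ≤ n + 1 → T x k < T x s →
    ∃ l : List ℕ, (∀ y ∈ l, 1 ≤ y ∧ y < x) ∧ (l ++ [x]).head? = some k ∧
      OK3 (TOK n T k) (0 :: (l ++ [x, s])) := by
  intro x
  induction x using Nat.strong_induction_on with
  | _ x ih =>
  intro s hkx hxn hsx hs1 hsn h
  have hnk : ¬ x ≤ k := by omega
  obtain ⟨y, hy, hmax⟩ := Finset.exists_max_image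
      ((Finset.Ico k x).filter (fun y => T x y < T x s)) (fun y => T x y)
      ⟨k, by simp only [Finset.mem_filter, Finset.mem_Ico]; omega⟩
  simp only [Finset.mem_filter, Finset.mem_Ico] at hy hmax
  have hT : TOK n T k y x s := by
    refine ⟨by omega, hsx, ?_, ?_⟩
    · simp only [bef, hnk, if_false]; exact hy.2
    · intro z hz1 hz2 hz3 hz4 hz5 hf
      simp only [bef, hnk, if_false] at hz4 hz5
      have := hmax z ⟨by unfold fb at hf; omega, hz5⟩
      omega
  by_cases hyk : y = k
  · subst hyk
    refine ⟨[y], by simp; omega, by simp, ?_⟩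
    refine ⟨⟨by omega, by omega, ?_, ?_⟩, hT, trivial⟩
    · simp only [bef, le_refl, if_true]
      exact ax.bot _ _ (by omega) (by omega) (by omega) (by omega) (by omega)
    · intro z _ _ _ _ _; unfold fb; omega
  · have hc : T y k < T y x := by
      have h1 := hmax k ⟨by omega, h⟩
      have t := ax.tri k y x (by omega) (by omega) (by omega) (by omega)
      have s1 := ax.sym y x (by omega) (by omega) (by omega) (by omega)
      have s2 := ax.sym k x (by omega) (by omega) (by omega) (by omega)
      have s3 := ax.sym y k (by omega) (by omega) (by omega) (by omega)
      omega
    obtain ⟨l, hl1, hl2, hl3⟩ := ih y (by omega) x (by omega) (by omega) (by omega)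
      (by omega) (by omega) hc
    refine ⟨l ++ [y], ?_, ?_, ?_⟩
    · intro z hz
      rcases List.mem_append.1 hz with hz | hz
      · have := hl1 z hz; omega
      · simp at hz; omega
    · rw [List.head?_append, hl2]; rfl
    · have := OK3.append (P := TOK n T k) y x [s] ⟨hT, trivial⟩ (0 :: l) hl3
      simpa using this

/-- glueing -/
theorem glue {n T k} (hk1 : 1 ≤ k) (hkn : k ≤ n) {U V : List ℕ} {x y : ℕ}
    (hU : ∀ z ∈ U, 1 ≤ z ∧ z ≤ n + 1) (hV : ∀ z ∈ V, 1 ≤ z ∧ z ≤ n + 1)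
    (hx : 1 ≤ x ∧ x ≤ n + 1) (hy : 1 ≤ y ∧ y ≤ n + 1)
    (hh : (U ++ [x]).head? = some k) (hl : (y :: V).getLast? = some (k + 1))
    (h1 : OK3 (TOK n T k) (0 :: (U ++ [x, y]))) (h2 : OK3 (TOK n T k) (x :: y :: (V ++ [0]))) :
    (k, (U ++ x :: y :: V)) ∈ PA n T := by
  refine ⟨hk1, hkn, ?_, ?_, ?_, ?_⟩
  · intro r hr
    simp at hr
    rcases hr with hr | rfl | rfl | hr
    · exact hU r hr
    · exact hx
    · exact hy
    · exact hV r hr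
  · have : U ++ x :: y :: V = (U ++ [x]) ++ y :: V := by simp
    simp only [this]
    rw [List.head?_append, hh]; rfl
  · have : U ++ x :: y :: V = (U ++ [x]) ++ y :: V := by simp
    simp only [this]
    rw [List.getLast?_append, hl]; rfl
  · have := OK3.append (P := TOK n T k) x y (V ++ [0]) h2 (0 :: U) h1
    simpa using this

/-- base paths -/
theorem base_path {n T} (ax : AX n T) {k j : ℕ} (hj : 1 ≤ j) (hjk : j ≤ k) (hkn : k ≤ n)
    (h1 : j = k ∨ T (n + 1) k < T (n + 1) j) (h2 : k = n ∨ T (n + 1) j < T (n + 1) (k + 1)) :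
    ∃ U V : List ℕ, (∀ x ∈ U, j < x ∧ x ≤ k) ∧ (∀ x ∈ V, k < x ∧ x < n + 1) ∧
      (k, U ++ j :: (n + 1) :: V) ∈ PA n T := by
  have h1' : j = k ∨ T j (n + 1) < T j k := by
    by_cases hjk' : j = k
    · exact Or.inl hjk'
    · right
      have h1 := h1.resolve_left hjk'
      have t := ax.tri j k (n + 1) hj (by omega) (by omega) (by omega)
      have s1 := ax.sym j (n + 1) (by omega) (by omega) (by omega) (by omega)
      have s2 := ax.sym k (n + 1) (by omega) (by omega) (by omega) (by omega)
      omega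
  obtain ⟨U, hU1, hU2, hU3⟩ := up_path ax hkn _ j (n + 1) rfl hj hjk (by omega) (by omega)
    (by omega) h1'
  obtain ⟨V, hV1, hV2, hV3⟩ := down_path ax (k := k) (by omega) (n + 1) j (by omega) (by omega)
    (by omega) hj (by omega) (by rcases h2 with h | h <;> omega)
  refine ⟨U, V, hU1, hV1, glue (by omega) hkn ?_ ?_ (by omega) (by omega) hU2 hV2 hU3 hV3⟩
  · intro z hz; have := hU1 z hz; omega
  · intro z hz; have := hV1 z hz; omega

/-- extra paths of the first kind -/
theorem extra_path {n T} (ax : AX n T) {k x : ℕ} (hk1 : 1 ≤ k) (hkx : k + 1 < x) (hxn : x ≤ n)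
    (h1 : T (n + 1) k < T (n + 1) x) (h2 : T (n + 1) x < T (n + 1) (k + 1)) :
    ∃ U V : List ℕ, (∀ y ∈ U, y < n + 1) ∧ (∀ y ∈ V, y < n + 1) ∧
      (k, U ++ x :: (n + 1) :: V) ∈ PA n T := by
  have h1' : T x k < T x (n + 1) := by
    have t := ax.tri k x (n + 1) hk1 (by omega) (by omega) (by omega)
    have s1 := ax.sym k (n + 1) (by omega) (by omega) (by omega) (by omega)
    have s2 := ax.sym x (n + 1) (by omega) (by omega) (by omega) (by omega)
    have s3 := ax.sym x k (by omega) (by omega) (by omega) (by omega)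
    omega
  obtain ⟨U, hU1, hU2, hU3⟩ := mid_path ax hk1 x (n + 1) (by omega) (by omega) (by omega)
    (by omega) (by omega) h1'
  obtain ⟨V, hV1, hV2, hV3⟩ := down_path ax hk1 (n + 1) x (by omega) (by omega)
    (by omega) (by omega) (by omega) (Or.inr h2)
  refine ⟨U, V, ?_, ?_, glue hk1 (by omega) ?_ ?_ (by omega) (by omega) hU2 hV2 hU3 hV3⟩
  · intro z hz; have := hU1 z hz; omega
  · intro z hz; have := hV1 z hz; omega
  · intro z hz; have := hU1 z hz; omega
  · intro z hz; have := hV1 z hz; omega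

/-- the extra path with a valley at the crossing of `ℓ_1` and `ℓ_{n+1}` -/
theorem valley_path {n T} (ax : AX n T) {k : ℕ} (hk1 : 2 ≤ k) (hkn : k + 1 ≤ n)
    (h1 : T (n + 1) k < T (n + 1) 1) (h2 : T (n + 1) 1 < T (n + 1) (k + 1))
    (hD : ∀ x, k + 1 < x → x ≤ n → T (n + 1) k < T (n + 1) x → T (n + 1) x < T (n + 1) (k + 1) →
      False)
    (hA : ∀ x, 2 ≤ x → x < k → T 1 (k + 1) < T 1 x → T 1 x < T 1 k → False) :
    (k, [k, n + 1, 1, k + 1]) ∈ PA n T := by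
  have e1 : ¬ n + 1 ≤ k := by omega
  have e2 : 1 ≤ k := by omega
  have e3 : ¬ k + 1 ≤ k := by omega
  have t := ax.tri 1 (k+1) (n + 1) (by omega) (by omega) (by omega) (by omega)
  have t' := ax.tri 1 k (n + 1) (by omega) (by omega) (by omega) (by omega)
  have s1 := ax.sym 1 (n + 1) (by omega) (by omega) (by omega) (by omega)
  have s2 := ax.sym (k+1) (n + 1) (by omega) (by omega) (by omega) (by omega)
  have s3 := ax.sym k (n + 1) (by omega) (by omega) (by omega) (by omega)
  refine ⟨e2, by simp only; omega, ?_, rfl, rfl, ?_⟩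
  · intro r hr; simp at hr; omega
  · refine ⟨⟨by omega, by omega, ?_, ?_⟩, ⟨by omega, by omega, ?_, ?_⟩, ⟨by omega, by omega, ?_, ?_⟩,
      ⟨by omega, by omega, ?_, ?_⟩, trivial⟩
    · simp only [bef, le_refl, if_true]
      exact ax.bot _ _ (by omega) (by omega) (by omega) (by omega) (by omega)
    · intro z _ _ _ _ _; unfold fb; dsimp only; omega
    · simp only [bef, e1, if_false]; exact h1
    · intro z hz1 hz2 hz3 hz4 hz5 hf
      simp only [bef, e1, if_false] at hz4 hz5
      simp only [fb] at hf
      have : z ≠ k + 1 := by rintro rfl; omega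
      exact hD z (by omega) (by omega) hz4 (by omega)
    · simp only [bef, e2, if_true]; omega
    · intro z hz1 hz2 hz3 hz4 hz5 hf
      simp only [bef, e2, if_true] at hz4 hz5
      simp only [fb] at hf
      have : z ≠ k := by rintro rfl; omega
      exact hA z (by omega) (by omega) hz5 (by omega)
    · simp only [bef, e3, if_false]
      exact ax.bot _ _ (by omega) (by omega) (by omega) (by omega) (by omega)
    · intro z _ _ _ _ _; unfold fb; dsimp only; omega

/-! ### Counting -/

/-- `p` is a base path through wire `n+1` entered from wire `j`. -/
def Base (n j : ℕ) (p : ℕ × List ℕ) : Prop :=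
  j ≤ p.1 ∧ p.1 ≤ n ∧ ∃ U V : List ℕ, (∀ x ∈ U, x < n + 1) ∧ (∀ x ∈ V, p.1 < x ∧ x < n + 1) ∧
    p.2 = U ++ j :: (n + 1) :: V

def Valid (n : ℕ) (T : ℕ → ℕ → ℕ) (j k : ℕ) : Prop :=
  1 ≤ j ∧ j ≤ k ∧ k ≤ n ∧ (j = k ∨ T (n + 1) k < T (n + 1) j) ∧
    (k = n ∨ T (n + 1) j < T (n + 1) (k + 1))

theorem base_of_valid {n T} (ax : AX n T) {j k} (h : Valid n T j k) :
    ∃ p ∈ PA n T, Base n j p ∧ p.1 = k := by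
  obtain ⟨h1, h2, h3, h4, h5⟩ := h
  obtain ⟨U, V, hU, hV, hp⟩ := base_path ax h1 h2 h3 h4 h5
  exact ⟨_, hp, ⟨h2, h3, U, V, fun x hx => by have := hU x hx; omega, hV, rfl⟩, rfl⟩

theorem AX.inj {n T} (ax : AX n T) {x y} (hx : 1 ≤ x) (hxn : x ≤ n) (hy : 1 ≤ y) (hyn : y ≤ n)
    (hxy : x ≠ y) : T (n + 1) x ≠ T (n + 1) y := by
  have s1 := ax.sym x (n + 1) (by omega) (by omega) (by omega) (by omega)
  have s2 := ax.sym y (n + 1) (by omega) (by omega) (by omega) (by omega)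
  rcases Nat.lt_or_gt_of_ne hxy with h | h
  · have := ax.tri x y (n + 1) hx h (by omega) (by omega)
    omega
  · have := ax.tri y x (n + 1) hy h (by omega) (by omega)
    omega

theorem exists_valid {n T} (ax : AX n T) {j} (hj : 1 ≤ j) : ∀ (d s : ℕ), n - s = d → j ≤ s → s ≤ n →
    (j = s ∨ T (n + 1) s < T (n + 1) j) → ∃ k, s ≤ k ∧ Valid n T j k := by
  intro d
  induction d with
  | zero =>
    intro s h1 h2 h3 h4
    exact ⟨s, le_refl _, hj, h2, h3, h4, Or.inl (by omega)⟩
  | succ d ih =>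
    intro s h1 h2 h3 h4
    by_cases h : T (n + 1) j < T (n + 1) (s + 1)
    · exact ⟨s, le_refl _, hj, h2, h3, h4, Or.inr h⟩
    · have := ax.inj (x := j) (y := s + 1) hj (by omega) (by omega) (by omega) (by omega)
      obtain ⟨k, hk, hv⟩ := ih (s + 1) (by omega) (by omega) (by omega) (Or.inr (by omega))
      exact ⟨k, by omega, hv⟩

theorem split_inj {z : ℕ} {V V' : List ℕ} : ∀ (l l' : List ℕ), z ∉ l → z ∉ l' →
    l ++ z :: V = l' ++ z :: V' → l = l' ∧ V = V'
  | [], [], _, _, h => by simpa using h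
  | [], b :: l', _, h2, h => by simp at h h2; exact absurd h.1 h2.1
  | a :: l, [], h1, _, h => by simp at h h1; exact absurd h.1.symm h1.1
  | a :: l, b :: l', h1, h2, h => by
    simp only [List.mem_cons, not_or] at h1 h2
    simp only [List.cons_append, List.cons.injEq] at h
    have := split_inj l l' h1.2 h2.2 h.2
    exact ⟨by rw [h.1, this.1], this.2⟩

theorem pred_unique {n j j'} {U V U' V' : List ℕ} (hU : ∀ x ∈ U, x < n + 1) (hU' : ∀ x ∈ U', x < n + 1)
    (hj : j ≤ n) (hj' : j' ≤ n) (h : U ++ j :: (n + 1) :: V = U' ++ j' :: (n + 1) :: V') :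
    j = j' ∧ V = V' := by
  have h' : (U ++ [j]) ++ (n + 1) :: V = (U' ++ [j']) ++ (n + 1) :: V' := by simpa using h
  have a1 : n + 1 ∉ U ++ [j] := by
    simp only [List.mem_append, List.mem_singleton, not_or]
    exact ⟨fun h => by have := hU _ h; omega, by omega⟩
  have a2 : n + 1 ∉ U' ++ [j'] := by
    simp only [List.mem_append, List.mem_singleton, not_or]
    exact ⟨fun h => by have := hU' _ h; omega, by omega⟩
  obtain ⟨b1, b3⟩ := split_inj _ _ a1 a2 h'
  have := List.append_inj' b1 rfl
  simp at this
  exact ⟨this.2, b3⟩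

theorem base_inj {n j j' p} (hp : Base n j p) (hp' : Base n j' p) : j = j' := by
  obtain ⟨h1, h2, U, V, hU, hV, e⟩ := hp
  obtain ⟨h1', h2', U', V', hU', hV', e'⟩ := hp'
  exact (pred_unique hU hU' (by omega) (by omega) (e.symm.trans e')).1

theorem base_mem {n j p} (hp : Base n j p) : n + 1 ∈ p.2 := by
  obtain ⟨h1, h2, U, V, hU, hV, e⟩ := hp
  simp [e]

theorem count_aux {n T} (hn : 1 ≤ n) (fin : (PA n T).Finite) (f : ℕ → ℕ × List ℕ)
    (hf : ∀ j, 1 ≤ j → j ≤ n → f j ∈ PA n T ∧ Base n j (f j)) :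
    (PA (n - 1) T ∪ f '' (Set.Icc 1 n)) ⊆ PA n T ∧
    (PA (n - 1) T ∪ f '' (Set.Icc 1 n)).ncard = (PA (n - 1) T).ncard + n := by
  obtain ⟨m, rfl⟩ : ∃ m, n = m + 1 := ⟨n - 1, by omega⟩
  simp only [Nat.add_sub_cancel]
  have hsub : (PA m T ∪ f '' (Set.Icc 1 (m + 1))) ⊆ PA (m + 1) T := by
    rintro p (hp | ⟨j, ⟨h1, h2⟩, rfl⟩)
    · exact PA_lift m T hp
    · exact (hf j h1 h2).1
  refine ⟨hsub, ?_⟩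
  rw [Set.ncard_union_eq ?_ (fin.subset (subset_trans Set.subset_union_left hsub))
    (Set.toFinite _)]
  · rw [Set.InjOn.ncard_image]
    · congr 1
      rw [← Finset.coe_Icc, Set.ncard_coe_finset]; simp
    · intro a ha b hb hab
      have := (hf a ha.1 ha.2).2
      rw [hab] at this
      exact base_inj this (hf b hb.1 hb.2).2
  · rw [Set.disjoint_left]
    rintro p hp ⟨j, ⟨h1, h2⟩, rfl⟩
    have := hp.2.2.1 _ (base_mem (hf j h1 h2).2)
    omega

theorem exists_f {n T} (ax : AX n T) : ∃ f : ℕ → ℕ × List ℕ,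
    ∀ j, 1 ≤ j → j ≤ n → f j ∈ PA n T ∧ Base n j (f j) := by
  have : ∀ j, ∃ p, 1 ≤ j → j ≤ n → p ∈ PA n T ∧ Base n j p := by
    intro j
    by_cases h : 1 ≤ j ∧ j ≤ n
    · obtain ⟨k, hk, hv⟩ := exists_valid ax h.1 _ j rfl (le_refl _) h.2 (Or.inl rfl)
      obtain ⟨p, hp, hb, _⟩ := base_of_valid ax hv
      exact ⟨p, fun _ _ => ⟨hp, hb⟩⟩
    · exact ⟨(0, []), fun h1 h2 => absurd ⟨h1, h2⟩ h⟩
  choose f hf using this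
  exact ⟨f, hf⟩

theorem count_le {n T} (ax : AX n T) (hn : 1 ≤ n) (fin : (PA n T).Finite) :
    (PA (n - 1) T).ncard + n ≤ (PA n T).ncard := by
  obtain ⟨f, hf⟩ := exists_f ax
  obtain ⟨h1, h2⟩ := count_aux hn fin f hf
  rw [← h2]
  exact Set.ncard_le_ncard h1 fin

theorem tight_base {n T} (hn : 1 ≤ n) (fin : (PA n T).Finite)
    (ht : ¬ (PA (n - 1) T).ncard + n < (PA n T).ncard) (f : ℕ → ℕ × List ℕ)
    (hf : ∀ j, 1 ≤ j → j ≤ n → f j ∈ PA n T ∧ Base n j (f j))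
    {e} (he : e ∈ PA n T) (hm : n + 1 ∈ e.2) : ∃ j, 1 ≤ j ∧ j ≤ n ∧ f j = e := by
  obtain ⟨h1, h2⟩ := count_aux hn fin f hf
  have h3 := Set.eq_of_subset_of_ncard_le h1 (by omega) fin
  rw [← h3] at he
  rcases he with he | ⟨j, ⟨a, b⟩, rfl⟩
  · have := he.2.2.1 _ hm
    omega
  · exact ⟨j, a, b, rfl⟩

theorem tight_base' {n T} (ax : AX n T) (hn : 1 ≤ n) (fin : (PA n T).Finite)
    (ht : ¬ (PA (n - 1) T).ncard + n < (PA n T).ncard)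
    {e} (he : e ∈ PA n T) (hm : n + 1 ∈ e.2) : ∃ j, Base n j e := by
  obtain ⟨f, hf⟩ := exists_f ax
  obtain ⟨j, h1, h2, rfl⟩ := tight_base hn fin ht f hf he hm
  exact ⟨j, (hf j h1 h2).2⟩

/-- 312-avoidance -/
theorem tight_312 {n T} (ax : AX n T) (hn : 1 ≤ n) (fin : (PA n T).Finite)
    (ht : ¬ (PA (n - 1) T).ncard + n < (PA n T).ncard) {k x : ℕ} (hk1 : 1 ≤ k) (hkx : k + 1 < x)
    (hxn : x ≤ n) (h1 : T (n + 1) k < T (n + 1) x) (h2 : T (n + 1) x < T (n + 1) (k + 1)) :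
    False := by
  obtain ⟨U, V, hU, hV, hp⟩ := extra_path ax hk1 hkx hxn h1 h2
  obtain ⟨j, c1, c2, U', V', hU', hV', e⟩ := tight_base' ax hn fin ht hp (by simp)
  have := pred_unique hU hU' hxn (le_trans c1 c2) e
  simp only at c1
  omega

theorem tight_unique {n T} (ax : AX n T) (hn : 1 ≤ n) (fin : (PA n T).Finite)
    (ht : ¬ (PA (n - 1) T).ncard + n < (PA n T).ncard) {j k1 k2} (h1 : Valid n T j k1)
    (h2 : Valid n T j k2) : k1 = k2 := by
  obtain ⟨f, hf⟩ := exists_f ax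
  obtain ⟨p1, hp1, hb1, rfl⟩ := base_of_valid ax h1
  obtain ⟨p2, hp2, hb2, rfl⟩ := base_of_valid ax h2
  have key : ∀ p, p ∈ PA n T → Base n j p → f j = p := by
    intro p hp hb
    obtain ⟨j', a, b, e⟩ := tight_base hn fin ht f hf hp (base_mem hb)
    have := (hf j' a b).2
    rw [e] at this
    have := base_inj this hb
    subst this
    exact e
  rw [← key p1 hp1 hb1, ← key p2 hp2 hb2]

theorem tight_descent {n T} (ax : AX n T) (hn : 1 ≤ n) (fin : (PA n T).Finite)
    (ht : ¬ (PA (n - 1) T).ncard + n < (PA n T).ncard)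
    (hm : ∃ m, 1 ≤ m ∧ m < n ∧ T (n + 1) (m + 1) < T (n + 1) m) : T (n + 1) 2 < T (n + 1) 1 := by
  by_contra hcon
  have hs := Nat.find_spec hm
  have hmin := fun m => Nat.find_min hm (m := m)
  set h := Nat.find hm with hh
  obtain ⟨s1, s2, s3⟩ := hs
  have h2 : 2 ≤ h := by
    by_contra h2
    have : h = 1 := by omega
    rw [this] at s3
    exact hcon s3
  have a1 : T (n + 1) (h - 1) < T (n + 1) h := by
    have := hmin (h - 1) (by omega)
    have := ax.inj (x := h - 1) (y := h) (by omega) (by omega) (by omega) (by omega) (by omega)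
    rw [show h - 1 + 1 = h by omega] at *
    omega
  have e : h - 1 + 1 = h := by omega
  have := ax.inj (x := h - 1) (y := h + 1) (by omega) (by omega) (by omega) (by omega) (by omega)
  rcases Nat.lt_or_gt_of_ne this with c | c
  · exact tight_312 ax hn fin ht (k := h - 1) (x := h + 1) (by omega) (by omega) (by omega) c
      (by rw [e]; exact s3)
  · have v1 : Valid n T (h - 1) (h - 1) :=
      ⟨by omega, le_refl _, by omega, Or.inl rfl, Or.inr (by rw [e]; exact a1)⟩
    obtain ⟨k, hk, v2⟩ := exists_valid ax (j := h - 1) (by omega) _ (h + 1) rfl (by omega) (by omega)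
      (Or.inr c)
    have := tight_unique ax hn fin ht v1 v2
    omega

/-- crossing of a level by a sequence -/
theorem exists_cross (g : ℕ → ℕ) (v : ℕ) : ∀ n, 2 ≤ n → g 2 < v → v < g n → (∀ k, 2 ≤ k → k ≤ n → g k ≠ v) →
    ∃ k, 2 ≤ k ∧ k + 1 ≤ n ∧ g k < v ∧ v < g (k + 1) := by
  intro n
  induction n with
  | zero => intro h; omega
  | succ n ih =>
    intro h1 h2 h3 h4
    by_cases hn : n + 1 = 2
    · rw [hn] at h3; omega
    by_cases hv : v < g n
    · obtain ⟨k, a, b, c⟩ := ih (by omega) h2 hv (fun k hk hk' => h4 k hk (by omega))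
      exact ⟨k, a, by omega, c⟩
    · have := h4 n (by omega) (by omega)
      exact ⟨n, by omega, le_refl _, by omega, h3⟩

theorem strict_or {n T T2} (ax : AX n T) (ax2 : AX n T2) (hn : 1 ≤ n) (fin : (PA n T).Finite)
    (fin2 : (PA n T2).Finite)
    (hT2 : ∀ r s, 1 ≤ r → r ≤ n + 1 → 1 ≤ s → s ≤ n + 1 → T2 r s = T (n + 2 - r) (n + 2 - s))
    (hm : ∃ m, 1 ≤ m ∧ m < n ∧ T (n + 1) (m + 1) < T (n + 1) m)
    (hm2 : ∃ m, 1 ≤ m ∧ m < n ∧ T2 (n + 1) (m + 1) < T2 (n + 1) m) :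
    (PA (n - 1) T).ncard + n < (PA n T).ncard ∨ (PA (n - 1) T2).ncard + n < (PA n T2).ncard := by
  by_contra hcon
  rw [not_or] at hcon
  obtain ⟨ht, ht2⟩ := hcon
  have d1 := tight_descent ax hn fin ht hm
  have d2 := tight_descent ax2 hn fin2 ht2 hm2
  have hn2 : 2 ≤ n := by obtain ⟨m, a, b, _⟩ := hm; omega
  rw [hT2 _ _ (by omega) (by omega) (by omega) (by omega),
    hT2 _ _ (by omega) (by omega) (by omega) (by omega)] at d2
  rw [show n + 2 - (n + 1) = 1 by omega, show n + 2 - 2 = n by omega,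
    show n + 2 - 1 = n + 1 by omega] at d2
  have t := ax.tri 1 n (n + 1) (by omega) (by omega) (by omega) (by omega)
  have s1 := ax.sym 1 (n + 1) (by omega) (by omega) (by omega) (by omega)
  have s2 := ax.sym n (n + 1) (by omega) (by omega) (by omega) (by omega)
  obtain ⟨k, k1, k2, k3, k4⟩ := exists_cross (fun x => T (n + 1) x) (T (n + 1) 1) n hn2 d1
    (by omega) (fun k a b => ax.inj (by omega) b (by omega) (by omega) (by omega))
  have hp := valley_path ax k1 k2 k3 k4
    (fun x a b c d => tight_312 ax hn fin ht (by omega) a b c d)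
    (fun x a b c d => tight_312 ax2 hn fin2 ht2 (k := n + 1 - k) (x := n + 2 - x) (by omega)
      (by omega) (by omega)
      (by
        rw [hT2 _ _ (by omega) (by omega) (by omega) (by omega),
          hT2 _ _ (by omega) (by omega) (by omega) (by omega)]
        rw [show n + 2 - (n + 1) = 1 by omega, show n + 2 - (n + 1 - k) = k + 1 by omega,
          show n + 2 - (n + 2 - x) = x by omega]
        exact c)
      (by
        rw [hT2 _ _ (by omega) (by omega) (by omega) (by omega),
          hT2 _ _ (by omega) (by omega) (by omega) (by omega)]
        rw [show n + 2 - (n + 1) = 1 by omega, show n + 2 - (n + 1 - k + 1) = k by omega,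
          show n + 2 - (n + 2 - x) = x by omega]
        exact d))
  obtain ⟨j, c1, c2, U', V', hU', hV', e⟩ := tight_base' ax hn fin ht hp (by simp)
  have := pred_unique (U := []) (V := [1, k + 1]) (by simp) hU' (by omega) (le_trans c1 c2) e
  have h := hV' 1 (by rw [← this.2]; simp)
  simp only at h
  omega

/-! ### Reversal, order equivalence, acyclicity -/

def flip (n r : ℕ) : ℕ := if 1 ≤ r ∧ r ≤ n + 1 then n + 2 - r else r

theorem flip_flip (n r : ℕ) : flip n (flip n r) = r := by unfold flip; split_ifs <;> omega

theorem flip_zero (n : ℕ) : flip n 0 = 0 := by simp [flip]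

theorem flip_real {n r : ℕ} (h1 : 1 ≤ r) (h2 : r ≤ n + 1) : flip n r = n + 2 - r := by
  simp [flip, h1, h2]

def flipT (n : ℕ) (T : ℕ → ℕ → ℕ) : ℕ → ℕ → ℕ := fun r s => T (flip n r) (flip n s)

theorem flipT_flipT (n T) : flipT n (flipT n T) = T := by
  funext r s; simp [flipT, flip_flip]

theorem AX.flip {n T} (ax : AX n T) : AX n (flipT n T) := by
  refine ⟨?_, ?_, ?_⟩
  · intro r s h1 h2 h3 h4
    simp only [flipT, flip_real h1 h2, flip_real h3 h4]
    exact ax.sym _ _ (by omega) (by omega) (by omega) (by omega)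
  · intro r s h1 h2 h3 h4 h5
    simp only [flipT, flip_real h1 h2, flip_real h3 h4, flip_zero]
    exact ax.bot _ _ (by omega) (by omega) (by omega) (by omega) (by omega)
  · intro a b c h1 h2 h3 h4
    simp only [flipT, flip_real h1 (show a ≤ n + 1 by omega),
      flip_real (show 1 ≤ b by omega) (show b ≤ n + 1 by omega),
      flip_real (show 1 ≤ c by omega) h4]
    have t := ax.tri (n + 2 - c) (n + 2 - b) (n + 2 - a) (by omega) (by omega) (by omega) (by omega)
    have s1 := ax.sym (n + 2 - c) (n + 2 - b) (by omega) (by omega) (by omega) (by omega)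
    have s2 := ax.sym (n + 2 - c) (n + 2 - a) (by omega) (by omega) (by omega) (by omega)
    have s3 := ax.sym (n + 2 - b) (n + 2 - a) (by omega) (by omega) (by omega) (by omega)
    omega

theorem bef_flip {n T k r a b} (hk : k ≤ n) (hr1 : 1 ≤ r) (hr : r ≤ n + 1) :
    bef (flipT n T) (n + 1 - k) (flip n r) (flip n b) (flip n a) ↔ bef T k r a b := by
  unfold bef flipT
  simp only [flip_flip]
  rw [flip_real hr1 hr]
  by_cases h : r ≤ k
  · rw [if_neg (by omega), if_pos h]
  · rw [if_pos (by omega), if_neg h]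

theorem TOK_flip {n T k a r b} (hk : k ≤ n) (hr1 : 1 ≤ r) (hr : r ≤ n + 1) (h : TOK n T k a r b) :
    TOK n (flipT n T) (n + 1 - k) (flip n b) (flip n r) (flip n a) := by
  obtain ⟨h1, h2, h3, h4⟩ := h
  refine ⟨fun e => h2 ?_, fun e => h1 ?_, (bef_flip hk hr1 hr).2 h3, ?_⟩
  · rw [← flip_flip n b, e, flip_flip]
  · rw [← flip_flip n a, e, flip_flip]
  · intro x hx1 hx2 hx3 hx4 hx5 hx6
    have ex : x = flip n (flip n x) := (flip_flip n x).symm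
    rw [ex] at hx4 hx5
    rw [bef_flip hk hr1 hr] at hx4 hx5
    rw [flip_real hr1 hr] at hx3 hx6
    rw [flip_real hx1 hx2] at hx4 hx5
    refine h4 (n + 2 - x) (by omega) (by omega) (by omega) hx5 hx4 ?_
    unfold fb at *
    omega

theorem OK3.mid {P : ℕ → ℕ → ℕ → Prop} {R : ℕ → Prop} : ∀ (x : ℕ) (c : List ℕ) (y : ℕ),
    OK3 P (x :: (c ++ [y])) → (∀ r ∈ c, R r) → OK3 (fun a r b => P a r b ∧ R r) (x :: (c ++ [y]))
  | _, [], _, _, _ => trivial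
  | _, [r], _, h, hc => ⟨⟨h.1, hc r (by simp)⟩, trivial⟩
  | _, r :: s :: c, y, h, hc => ⟨⟨h.1, hc r (by simp)⟩,
      OK3.mid r (s :: c) y h.2 (fun r hr => hc r (List.mem_cons_of_mem _ hr))⟩

theorem IsP_flip {n T k c} (h : IsP n T k c) :
    IsP n (flipT n T) (n + 1 - k) (c.map (flip n)).reverse := by
  obtain ⟨h1, h2, h3, h4, h5, h6⟩ := h
  refine ⟨by omega, by omega, ?_, ?_, ?_, ?_⟩
  · intro r hr
    simp only [List.mem_reverse, List.mem_map] at hr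
    obtain ⟨a, ha, rfl⟩ := hr
    have := h3 a ha
    rw [flip_real this.1 this.2]; omega
  · rw [List.head?_reverse, List.getLast?_map, h5]
    simp only [Option.map_some, Option.some.injEq]
    rw [flip_real (by omega) (by omega)]; omega
  · rw [List.getLast?_reverse, List.head?_map, h4]
    simp only [Option.map_some, Option.some.injEq]
    rw [flip_real (by omega) (by omega)]; omega
  · have h7 := OK3.mid (R := fun r => 1 ≤ r ∧ r ≤ n + 1) 0 c 0 h6 h3
    have := OK3.reverse (Q := TOK n (flipT n T) (n + 1 - k)) (flip n)
      (0 :: (c ++ [0])) ?_ h7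
    · simpa [flip_zero] using this
    · intro a r b _ _ _ h
      exact TOK_flip h2 h.2.1 h.2.2 h.1

theorem PA_flip_ncard (n T) : (PA n (flipT n T)).ncard = (PA n T).ncard := by
  symm
  refine Set.ncard_congr (fun p _ => (n + 1 - p.1, (p.2.map (flip n)).reverse)) ?_ ?_ ?_
  · intro p hp
    exact IsP_flip hp
  · rintro ⟨k, c⟩ ⟨k', c'⟩ hp hp' e
    have e1 := hp.2.1
    have e2 := hp'.2.1
    simp only [Prod.mk.injEq, List.reverse_inj] at e e1 e2
    obtain ⟨e3, e4⟩ := e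
    have : Function.Injective (flip n) := fun a b h => by
      rw [← flip_flip n a, h, flip_flip]
    rw [(List.map_injective_iff.2 this) e4]
    rw [show k = k' by omega]
  · rintro ⟨k, c⟩ hp
    refine ⟨(n + 1 - k, (c.map (flip n)).reverse), ?_, ?_⟩
    · have := IsP_flip hp
      rw [flipT_flipT] at this
      exact this
    · have := hp.2.1
      simp only [Prod.mk.injEq, List.map_reverse, List.reverse_reverse, List.map_map]
      simp only at this
      refine ⟨by omega, ?_⟩
      rw [show flip n ∘ flip n = id from funext (flip_flip n)]
      simp

def OrdEq (n : ℕ) (T T' : ℕ → ℕ → ℕ) : Prop := ∀ r x y, 1 ≤ r → r ≤ n + 1 → x ≤ n + 1 → y ≤ n + 1 →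
  x ≠ r → y ≠ r → (T r x < T r y ↔ T' r x < T' r y)

theorem OrdEq.symm {n T T'} (h : OrdEq n T T') : OrdEq n T' T :=
  fun r x y a b c d e f => (h r x y a b c d e f).symm

theorem OrdEq.trans {n T T' T''} (h : OrdEq n T T') (h' : OrdEq n T' T'') : OrdEq n T T'' :=
  fun r x y a b c d e f => (h r x y a b c d e f).trans (h' r x y a b c d e f)

theorem OrdEq.refl (n T) : OrdEq n T T := fun _ _ _ _ _ _ _ _ _ => Iff.rfl

theorem OrdEq.flipped {n T T'} (h : OrdEq n T T') : OrdEq n (flipT n T) (flipT n T') := by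
  intro r x y h1 h2 h3 h4 h5 h6
  have : ∀ z, z ≤ n + 1 → flip n z ≤ n + 1 := by intro z hz; unfold flip; split_ifs <;> omega
  refine h _ _ _ ?_ (this _ h2) (this _ h3) (this _ h4) ?_ ?_
  · rw [flip_real h1 h2]; omega
  · intro e; exact h5 (by rw [← flip_flip n x, e, flip_flip])
  · intro e; exact h6 (by rw [← flip_flip n y, e, flip_flip])

theorem OrdEq.PA_subset {n T T'} (h : OrdEq n T T') : PA n T ⊆ PA n T' := by
  rintro ⟨k, c⟩ ⟨h1, h2, h3, h4, h5, h6⟩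
  refine ⟨h1, h2, h3, h4, h5, ?_⟩
  have h7 := OK3.mid (R := fun r => 1 ≤ r ∧ r ≤ n + 1) 0 c 0 h6 h3
  refine OK3.mono _ ?_ h7
  have hm : ∀ x, x ∈ 0 :: (c ++ [0]) → x ≤ n + 1 := by
    intro x hx
    simp only [List.mem_cons, List.mem_append, List.not_mem_nil, or_false] at hx
    rcases hx with rfl | hx | rfl
    · omega
    · exact (h3 x hx).2
    · omega
  intro a r b ha _ hb hr
  obtain ⟨⟨q1, q2, q3, q4⟩, hr1, hr2⟩ := hr
  have hb' : ∀ x y, x ≤ n + 1 → y ≤ n + 1 → x ≠ r → y ≠ r → (bef T k r x y ↔ bef T' k r x y) := by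
    intro x y hx hy hx' hy'
    unfold bef
    rw [h r x y hr1 hr2 hx hy hx' hy', h r y x hr1 hr2 hy hx hy' hx']
  refine ⟨q1, q2, (hb' _ _ (hm a ha) (hm b hb) q1 q2).1 q3, ?_⟩
  intro x x1 x2 x3 x4 x5
  exact q4 x x1 x2 x3 ((hb' _ _ (hm a ha) x2 q1 x3).2 x4) ((hb' _ _ x2 (hm b hb) x3 q2).2 x5)

theorem OrdEq.PA_eq {n T T'} (h : OrdEq n T T') : PA n T = PA n T' :=
  Set.Subset.antisymm h.PA_subset h.symm.PA_subset

theorem bef_tri {n T} (ax : AX n T) {k y z} (hk : k + 1 ≤ n + 1) (hy : 1 ≤ y) (hyn : y ≤ n + 1) (hz : 1 ≤ z)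
    (hzn : z ≤ n + 1) (hyz : y < z) (h1 : y ≠ k + 1) (h2 : z ≠ k + 1) :
    bef T k y z (k + 1) ↔ bef T k z y (k + 1) := by
  have s1 := ax.sym y z (by omega) (by omega) (by omega) (by omega)
  have s2 := ax.sym y (k + 1) (by omega) (by omega) (by omega) (by omega)
  have s3 := ax.sym z (k + 1) (by omega) (by omega) (by omega) (by omega)
  unfold bef
  by_cases c1 : y ≤ k
  · by_cases c2 : z ≤ k
    · have := ax.tri y z (k + 1) hy hyz (by omega) (by omega)
      simp only [c1, c2, if_true]; omega
    · have := ax.tri y (k + 1) z hy (by omega) (by omega) (by omega)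
      simp only [c1, c2, if_true, if_false]; omega
  · have := ax.tri (k + 1) y z (by omega) (by omega) (by omega) (by omega)
    have c2 : ¬ z ≤ k := by omega
    simp only [c1, c2, if_false]; omega

theorem exists_F {n T} (ax : AX n T) : ∀ k, k ≤ n + 1 → ∃ F : ℕ → ℕ → ℕ,
    (∀ r s, 1 ≤ r → r ≤ n + 1 → 1 ≤ s → s ≤ n + 1 → r ≠ s → F r s = F s r) ∧
    ∀ r x y, 1 ≤ r → r ≤ n + 1 → 1 ≤ x → x ≤ n + 1 → 1 ≤ y → y ≤ n + 1 → x ≠ r → y ≠ r →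
      bef T k r x y → F r x < F r y := by
  intro k
  induction k with
  | zero =>
    intro _
    refine ⟨T, fun r s a b c d _ => ax.sym r s a b c d, ?_⟩
    intro r x y h1 _ _ _ _ _ _ _ h
    unfold bef at h
    rwa [if_neg (by omega)] at h
  | succ k ih =>
    intro hk
    obtain ⟨F, hs, hF⟩ := ih (by omega)
    obtain ⟨B, hB⟩ : ∃ B, ∀ r x, r ≤ n + 1 → x ≤ n + 1 → F r x ≤ B := by
      refine ⟨∑ r ∈ Finset.range (n + 2), ∑ x ∈ Finset.range (n + 2), F r x, ?_⟩
      intro r x hr hx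
      refine le_trans ?_ (Finset.single_le_sum (f := fun r => ∑ x ∈ Finset.range (n + 2), F r x)
        (fun _ _ => Nat.zero_le _) (show r ∈ Finset.range (n + 2) by simp; omega))
      exact Finset.single_le_sum (f := fun x => F r x)
        (fun _ _ => Nat.zero_le _) (show x ∈ Finset.range (n + 2) by simp; omega)
    refine ⟨fun y z => if y = k + 1 ∨ z = k + 1 then 2 * B - F y z
      else if bef T k y z (k + 1) then F y z else F y z + 2 * B + 1, ?_, ?_⟩
    · intro r s h1 h2 h3 h4 h5
      simp only
      rw [hs r s h1 h2 h3 h4 h5]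
      by_cases c : r = k + 1 ∨ s = k + 1
      · rw [if_pos c, if_pos c.symm]
      · have c2 : ¬ (s = k + 1 ∨ r = k + 1) := fun h => c h.symm
        rw [if_neg c, if_neg c2]
        have : bef T k r s (k + 1) ↔ bef T k s r (k + 1) := by
          rcases Nat.lt_or_gt_of_ne h5 with h | h
          · exact bef_tri ax hk h1 h2 h3 h4 h (by omega) (by omega)
          · exact (bef_tri ax hk h3 h4 h1 h2 h (by omega) (by omega)).symm
        simp only [this]
    · intro r x y h1 h2 h3 h4 h5 h6 h7 h8 h
      simp only
      have bx := hB r x h2 h4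
      have bY := hB r y h2 h6
      by_cases hr : r = k + 1
      · rw [if_pos (Or.inl hr), if_pos (Or.inl hr)]
        have : bef T k r y x := by
          unfold bef at *
          rw [if_pos (by omega)] at h
          rwa [if_neg (by omega)]
        have := hF r y x h1 h2 h5 h6 h3 h4 h8 h7 this
        omega
      · have hb : bef T k r x y := by
          unfold bef at *
          by_cases c : r ≤ k
          · rw [if_pos (by omega)] at h
            rwa [if_pos c]
          · rw [if_neg (by omega)] at h
            rwa [if_neg c]
        have hlt := hF r x y h1 h2 h3 h4 h5 h6 h7 h8 hb
        by_cases hx : x = k + 1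
        · have hy : y ≠ k + 1 := by rintro rfl; rw [hx] at hlt; omega
          have : ¬ bef T k r y (k + 1) := by
            intro h'
            have := hF r y (k + 1) h1 h2 h5 h6 (by omega) hk h8 (by omega) h'
            rw [hx] at hlt
            omega
          rw [if_pos (Or.inr hx), if_neg (show ¬ (r = k + 1 ∨ y = k + 1) by omega), if_neg this]
          omega
        · by_cases hy : y = k + 1
          · rw [if_neg (show ¬ (r = k + 1 ∨ x = k + 1) by omega), if_pos (Or.inr hy),
              if_pos (by rw [← hy]; exact hb)]
            omega
          · rw [if_neg (show ¬ (r = k + 1 ∨ x = k + 1) by omega),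
              if_neg (show ¬ (r = k + 1 ∨ y = k + 1) by omega)]
            have : bef T k r y (k + 1) → bef T k r x (k + 1) := by
              intro h'
              unfold bef at *
              by_cases c : r ≤ k
              · rw [if_pos c] at hb h' ⊢; omega
              · rw [if_neg c] at hb h' ⊢; omega
            by_cases c1 : bef T k r y (k + 1)
            · rw [if_pos c1, if_pos (this c1)]; exact hlt
            · rw [if_neg c1]
              split_ifs <;> omega

/-! ### From reduced words to arrangements -/

def Letters (n : ℕ) (w : List ℕ) : Prop := ∀ a ∈ w, 1 ≤ a ∧ a ≤ n

theorem wordProd_append (u v : List ℕ) : wordProd (u ++ v) = wordProd u * wordProd v := by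
  simp [wordProd]

theorem wordProd_nil : wordProd [] = 1 := by simp [wordProd]

theorem wordProd_cons (a : ℕ) (v : List ℕ) : wordProd (a :: v) = sTrans a * wordProd v := by
  simp [wordProd]

theorem sTrans_apply (a x : ℕ) : sTrans a x = if x = a then a + 1 else if x = a + 1 then a else x := by
  simp [sTrans, Equiv.swap_apply_def]

theorem sTrans_symm (a : ℕ) : (sTrans a).symm = sTrans a := by simp [sTrans]

theorem sTrans_mul_self (a : ℕ) : sTrans a * sTrans a = 1 := by simp [sTrans]

theorem wordProd_range {n} : ∀ {w : List ℕ}, Letters n w → ∀ {x}, 1 ≤ x → x ≤ n + 1 →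
    1 ≤ wordProd w x ∧ wordProd w x ≤ n + 1
  | [], _, x, h1, h2 => by simp [wordProd_nil, h1, h2]
  | a :: w, hw, x, h1, h2 => by
    have ih := wordProd_range (w := w) (fun b hb => hw b (List.mem_cons_of_mem _ hb)) h1 h2
    have := hw a (by simp)
    rw [wordProd_cons, Equiv.Perm.mul_apply, sTrans_apply]
    split_ifs <;> omega

theorem wordProd_symm_range {n} : ∀ {w : List ℕ}, Letters n w → ∀ {x}, 1 ≤ x → x ≤ n + 1 →
    1 ≤ (wordProd w).symm x ∧ (wordProd w).symm x ≤ n + 1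
  | [], _, x, h1, h2 => by
    rw [wordProd_nil, show (1 : Equiv.Perm ℕ).symm x = x from rfl]
    exact ⟨h1, h2⟩
  | a :: w, hw, x, h1, h2 => by
    have := hw a (by simp)
    rw [wordProd_cons, show (sTrans a * wordProd w).symm x = (wordProd w).symm ((sTrans a).symm x) from rfl,
      sTrans_symm]
    refine wordProd_symm_range (fun b hb => hw b (List.mem_cons_of_mem _ hb)) ?_ ?_
    all_goals rw [sTrans_apply]; split_ifs <;> omega

theorem Letters.take {n w} (h : Letters n w) (m : ℕ) : Letters n (w.take m) :=
  fun a ha => h a (List.mem_of_mem_take ha)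

theorem letterAt_mem {w j} (h : ValidNode w j) : letterAt w j ∈ w := by
  obtain ⟨h1, h2⟩ := h
  unfold letterAt
  rw [List.getD_eq_getElem _ _ (by omega)]
  exact List.getElem_mem _

/-- position of wire `r` after `h` letters -/
def pos (w : List ℕ) (h r : ℕ) : ℕ := (wordProd (w.take h)).symm r

theorem pos_zero (w r) : pos w 0 r = r := by simp [pos, wordProd_nil]; rfl

theorem wireX_iff {w j r} : wireX w j = r ↔ pos w (j - 1) r = letterAt w j := by
  unfold wireX stateAbove pos
  rw [Equiv.symm_apply_eq]
  exact eq_comm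

theorem wireY_iff {w j r} : wireY w j = r ↔ pos w (j - 1) r = letterAt w j + 1 := by
  unfold wireY stateAbove pos
  rw [Equiv.symm_apply_eq]
  exact eq_comm

theorem wordProd_take_succ {w : List ℕ} {h : ℕ} (hh : h < w.length) :
    wordProd (w.take (h + 1)) = wordProd (w.take h) * sTrans (letterAt w (h + 1)) := by
  rw [List.take_succ_eq_append_getElem hh, wordProd_append, wordProd_cons, wordProd_nil, mul_one]
  unfold letterAt
  rw [List.getD_eq_getElem _ _ (by simpa using hh)]
  simp

theorem pos_succ {w : List ℕ} {h : ℕ} (hh : h < w.length) (r) :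
    pos w (h + 1) r = sTrans (letterAt w (h + 1)) (pos w h r) := by
  unfold pos
  rw [wordProd_take_succ hh]
  show (sTrans _).symm _ = _
  rw [sTrans_symm]

theorem pos_inj {w h r s} (e : pos w h r = pos w h s) : r = s :=
  (wordProd (w.take h)).symm.injective e

theorem pos_range {n w} (hw : Letters n w) (h : ℕ) {r} (h1 : 1 ≤ r) (h2 : r ≤ n + 1) :
    1 ≤ pos w h r ∧ pos w h r ≤ n + 1 := wordProd_symm_range (hw.take h) h1 h2

theorem wireX_ne_wireY (w j) : wireX w j ≠ wireY w j := by
  unfold wireX wireY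
  intro h
  have := (stateAbove w j).injective h
  omega

theorem wireX_range {n w j} (hw : Letters n w) (hj : ValidNode w j) :
    1 ≤ wireX w j ∧ wireX w j ≤ n + 1 := by
  have := hw _ (letterAt_mem hj)
  exact wordProd_range (hw.take _) (by omega) (by omega)

theorem wireY_range {n w j} (hw : Letters n w) (hj : ValidNode w j) :
    1 ≤ wireY w j ∧ wireY w j ≤ n + 1 := by
  have := hw _ (letterAt_mem hj)
  exact wordProd_range (hw.take _) (by omega) (by omega)

/-- the node `t_j` is the crossing of wires `r` and `s` -/
def Cr (w : List ℕ) (j r s : ℕ) : Prop :=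
  (wireX w j = r ∧ wireY w j = s) ∨ (wireX w j = s ∧ wireY w j = r)

theorem pos_step {w : List ℕ} {h : ℕ} (hh : h < w.length) {a b} (hab : a ≠ b)
    (hc : ¬ Cr w (h + 1) a b) : pos w (h + 1) a < pos w (h + 1) b ↔ pos w h a < pos w h b := by
  unfold Cr at hc
  simp only [wireX_iff, wireY_iff, Nat.add_sub_cancel] at hc
  have : pos w h a ≠ pos w h b := fun e => hab (pos_inj e)
  rw [pos_succ hh, pos_succ hh, sTrans_apply, sTrans_apply]
  split_ifs <;> omega

theorem pos_flip {w : List ℕ} {h : ℕ} (hh : h < w.length) {a b}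
    (hc : Cr w (h + 1) a b) : pos w (h + 1) a < pos w (h + 1) b ↔ ¬ pos w h a < pos w h b := by
  unfold Cr at hc
  simp only [wireX_iff, wireY_iff, Nat.add_sub_cancel] at hc
  rw [pos_succ hh, pos_succ hh, sTrans_apply, sTrans_apply]
  split_ifs <;> omega

structure Arr (n : ℕ) (w : List ℕ) (T : ℕ → ℕ → ℕ) : Prop where
  lett : Letters n w
  cross : ∀ r s, 1 ≤ r → r ≤ n + 1 → 1 ≤ s → s ≤ n + 1 → r ≠ s →
    ValidNode w (T r s) ∧ Cr w (T r s) r s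
  node : ∀ j r s, ValidNode w j → Cr w j r s → T r s = j
  bot : ∀ r, T r 0 = w.length + 1

theorem Arr.ord {n w T} (ar : Arr n w T) {a b} (h1 : 1 ≤ a) (h2 : a < b) (h3 : b ≤ n + 1) :
    ∀ h, h ≤ w.length → (pos w h a < pos w h b ↔ h < T a b) := by
  obtain ⟨v, c⟩ := ar.cross a b h1 (by omega) (by omega) h3 (by omega)
  intro h
  induction h with
  | zero =>
    intro _
    rw [pos_zero, pos_zero]
    have := v.1
    omega
  | succ h ih =>
    intro hh
    have ih := ih (by omega)
    by_cases hc : Cr w (h + 1) a b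
    · rw [pos_flip (by omega) hc, ih]
      have := ar.node (h + 1) a b ⟨by omega, hh⟩ hc
      omega
    · rw [pos_step (by omega) (by omega) hc, ih]
      have : T a b ≠ h + 1 := fun e => hc (e ▸ c)
      omega

theorem Arr.sym {n w T} (ar : Arr n w T) {r s} (h1 : 1 ≤ r) (h2 : r ≤ n + 1) (h3 : 1 ≤ s)
    (h4 : s ≤ n + 1) : T r s = T s r := by
  by_cases h : r = s
  · rw [h]
  · obtain ⟨v, c⟩ := ar.cross r s h1 h2 h3 h4 h
    exact (ar.node _ s r v (Or.symm c)).symm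

theorem Arr.ax {n w T} (ar : Arr n w T) : AX n T := by
  refine ⟨fun r s a b c d => ar.sym a b c d, ?_, ?_⟩
  · intro r s a b c d e
    have := (ar.cross r s a b c d e).1.2
    rw [ar.bot]; omega
  · intro a b c h1 h2 h3 h4
    obtain ⟨v, x⟩ := ar.cross a c h1 (by omega) (by omega) h4 (by omega)
    have n1 : T a b ≠ T a c := fun e => by
      have y := (ar.cross a b h1 (by omega) (by omega) (by omega) (by omega)).2
      rw [e] at y
      unfold Cr at x y
      omega
    have n2 : T b c ≠ T a c := fun e => by
      have y := (ar.cross b c (by omega) (by omega) (by omega) (by omega) (by omega)).2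
      rw [e] at y
      unfold Cr at x y
      omega
    unfold Cr at x
    simp only [wireX_iff, wireY_iff] at x
    have v1 := v.1
    have v2 := v.2
    have o1 := ar.ord h1 h2 (by omega) (T a c - 1) (by omega)
    have o2 := ar.ord (by omega) h3 h4 (T a c - 1) (by omega)
    have e1 : pos w (T a c - 1) a ≠ pos w (T a c - 1) b := fun e => by have := pos_inj e; omega
    have e2 : pos w (T a c - 1) b ≠ pos w (T a c - 1) c := fun e => by have := pos_inj e; omega
    omega

theorem longestPerm_apply (n k : ℕ) : longestPerm n k = flip n k := rfl

theorem longestPerm_symm_apply (n k : ℕ) : (longestPerm n).symm k = flip n k := rfl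

theorem exists_node {n w} (hw : IsReduced n w) {a b} (h1 : 1 ≤ a) (h2 : a < b) (h3 : b ≤ n + 1) :
    ∃ j, ValidNode w j ∧ Cr w j a b := by
  by_contra hcon
  have key : ∀ h, h ≤ w.length → pos w h a < pos w h b := by
    intro h
    induction h with
    | zero => intro _; rw [pos_zero, pos_zero]; exact h2
    | succ h ih =>
      intro hh
      rw [pos_step (by omega) (by omega)]
      · exact ih (by omega)
      · intro hc
        exact hcon ⟨h + 1, ⟨by omega, hh⟩, hc⟩
  have := key w.length (le_refl _)
  unfold pos at this
  rw [List.take_length, hw.2.2, longestPerm_symm_apply, longestPerm_symm_apply,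
    flip_real h1 (by omega), flip_real (by omega) h3] at this
  omega

theorem node_inj {n w} (hw : IsReduced n w) {j j' r s} (hj : ValidNode w j) (hj' : ValidNode w j')
    (h : Cr w j r s) (h' : Cr w j' r s) : j = j' := by
  have hcard : (Finset.Icc 1 w.length).card ≤ (Finset.powersetCard 2 (Finset.Icc 1 (n + 1))).card := by
    rw [Finset.card_powersetCard, Nat.card_Icc, Nat.card_Icc, Nat.add_sub_cancel, Nat.add_sub_cancel,
      hw.1, Nat.choose_two_right, Nat.add_sub_cancel, mul_comm]
  have hsurj : Set.SurjOn (fun j => ({wireX w j, wireY w j} : Finset ℕ))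
      (Finset.Icc 1 w.length : Finset ℕ) (Finset.powersetCard 2 (Finset.Icc 1 (n + 1)) : Finset (Finset ℕ)) := by
    intro p hp
    simp only [Finset.mem_coe, Finset.mem_powersetCard] at hp
    obtain ⟨hp1, hp2⟩ := hp
    obtain ⟨a, b, hab, rfl⟩ := Finset.card_eq_two.1 hp2
    have ha := Finset.mem_Icc.1 (hp1 (show a ∈ ({a, b} : Finset ℕ) by simp))
    have hb := Finset.mem_Icc.1 (hp1 (show b ∈ ({a, b} : Finset ℕ) by simp))
    have : ∃ j, ValidNode w j ∧ Cr w j a b := by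
      rcases Nat.lt_or_gt_of_ne hab with h | h
      · exact exists_node hw ha.1 h hb.2
      · obtain ⟨j, v, c⟩ := exists_node hw hb.1 h ha.2
        exact ⟨j, v, Or.symm c⟩
    obtain ⟨j, v, c⟩ := this
    refine ⟨j, by simpa [ValidNode] using v, ?_⟩
    rcases c with ⟨c1, c2⟩ | ⟨c1, c2⟩
    · simp only [c1, c2]
    · simp only [c1, c2]; exact Finset.pair_comm _ _
  have hinj := Finset.injOn_of_surjOn_of_card_le (s := Finset.Icc 1 w.length)
    (t := Finset.powersetCard 2 (Finset.Icc 1 (n + 1))) _ ?_ hsurj hcard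
  · refine hinj (by simpa [ValidNode] using hj) (by simpa [ValidNode] using hj') ?_
    have e : ∀ {j}, Cr w j r s → ({wireX w j, wireY w j} : Finset ℕ) = {r, s} := by
      rintro j (⟨c1, c2⟩ | ⟨c1, c2⟩)
      · rw [c1, c2]
      · rw [c1, c2]; exact Finset.pair_comm _ _
    simp only [e h, e h']
  · intro j hj
    have hj : ValidNode w j := by simpa [ValidNode] using hj
    simp only [Finset.mem_coe, Finset.mem_powersetCard]
    refine ⟨?_, Finset.card_pair (wireX_ne_wireY w j)⟩
    intro x hx
    simp only [Finset.mem_insert, Finset.mem_singleton] at hx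
    rw [Finset.mem_Icc]
    rcases hx with rfl | rfl
    · exact wireX_range hw.2.1 hj
    · exact wireY_range hw.2.1 hj

theorem IsReduced.arr {n w} (hw : IsReduced n w) : ∃ T, Arr n w T := by
  have hex : ∀ r s, 1 ≤ r → r ≤ n + 1 → 1 ≤ s → s ≤ n + 1 → r ≠ s → ∃ j, ValidNode w j ∧ Cr w j r s := by
    intro r s h1 h2 h3 h4 hab
    rcases Nat.lt_or_gt_of_ne hab with h | h
    · exact exists_node hw h1 h h4
    · obtain ⟨j, v, c⟩ := exists_node hw h3 h h2
      exact ⟨j, v, Or.symm c⟩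
  refine ⟨fun r s => if h : ∃ j, ValidNode w j ∧ Cr w j r s then h.choose else
    w.length + 1, hw.2.1, ?_, ?_, ?_⟩
  · intro r s h1 h2 h3 h4 h5
    have h := hex r s h1 h2 h3 h4 h5
    simp only [dif_pos h]
    exact h.choose_spec
  · intro j r s v c
    have h : ∃ j, ValidNode w j ∧ Cr w j r s := ⟨j, v, c⟩
    simp only [dif_pos h]
    exact node_inj hw h.choose_spec.1 v h.choose_spec.2 c
  · intro r
    have h : ¬ ∃ j, ValidNode w j ∧ Cr w j r 0 := by
      rintro ⟨j, v, c⟩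
      have a := wireX_range hw.2.1 v
      have b := wireY_range hw.2.1 v
      unfold Cr at c
      omega
    simp only [dif_neg h]

/-! ### Paths of a word and abstract paths -/

theorem cr_of_on {w j r} (h : NodeOnWire w j r) : Cr w j r (otherWire w j r) := by
  unfold otherWire
  rcases h with h | h
  · rw [if_pos h]; exact Or.inl ⟨h, rfl⟩
  · by_cases h' : wireX w j = r
    · rw [if_pos h']; exact Or.inl ⟨h', rfl⟩
    · rw [if_neg h']; exact Or.inr ⟨rfl, h⟩

theorem other_of_cr {w j r s} (h : Cr w j r s) : NodeOnWire w j r ∧ otherWire w j r = s := by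
  have := wireX_ne_wireY w j
  unfold otherWire
  rcases h with ⟨h1, h2⟩ | ⟨h1, h2⟩
  · exact ⟨Or.inl h1, by rw [if_pos h1]; exact h2⟩
  · refine ⟨Or.inr h2, ?_⟩
    rw [if_neg (by rw [← h2]; exact this)]; exact h1

theorem other_props {n w T} (ar : Arr n w T) {j r} (hv : ValidNode w j) (h : NodeOnWire w j r) :
    1 ≤ r ∧ r ≤ n + 1 ∧ 1 ≤ otherWire w j r ∧ otherWire w j r ≤ n + 1 ∧ otherWire w j r ≠ r ∧
      T r (otherWire w j r) = j ∧ T (otherWire w j r) r = j := by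
  have c := cr_of_on h
  have a := wireX_range ar.lett hv
  have b := wireY_range ar.lett hv
  have d := wireX_ne_wireY w j
  have e1 := ar.node j _ _ hv c
  have e2 := ar.node j _ _ hv (Or.symm c)
  unfold Cr at c
  refine ⟨by omega, by omega, by omega, by omega, by omega, e1, e2⟩

theorem T_props {n w T} (ar : Arr n w T) {r s} (h1 : 1 ≤ r) (h2 : r ≤ n + 1) (h3 : 1 ≤ s)
    (h4 : s ≤ n + 1) (h5 : r ≠ s) :
    ValidNode w (T r s) ∧ NodeOnWire w (T r s) r ∧ otherWire w (T r s) r = s := by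
  obtain ⟨v, c⟩ := ar.cross r s h1 h2 h3 h4 h5
  exact ⟨v, other_of_cr c⟩

theorem mem_nodesOn {w r j} : j ∈ nodesOn w r ↔ ValidNode w j ∧ NodeOnWire w j r := by
  unfold nodesOn ValidNode
  simp only [List.mem_filter, List.mem_map, List.mem_range, decide_eq_true_eq]
  refine and_congr_left fun _ => ⟨?_, fun h => ⟨j - 1, by omega, by omega⟩⟩
  rintro ⟨a, h, rfl⟩
  omega

theorem nodesOn_nodup (w r) : (nodesOn w r).Nodup := by
  unfold nodesOn
  refine List.Nodup.filter _ (List.Nodup.map ?_ List.nodup_range)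
  intro a b h
  simpa using h

theorem mem_segList {w r a b j} : j ∈ segList w r a b ↔
    (ValidNode w j ∧ NodeOnWire w j r) ∧ min a b < j ∧ j < max a b := by
  unfold segList
  rw [List.mem_filter, mem_nodesOn]
  simp

theorem mem_tailList {w r a j} : j ∈ tailList w r a ↔
    (ValidNode w j ∧ NodeOnWire w j r) ∧ a < j := by
  unfold tailList
  rw [List.mem_filter, mem_nodesOn]
  simp

theorem forbidden_iff {w k j r} : Forbidden w k j r ↔ fb k r (otherWire w j r) := Iff.rfl

/-- the listed switching nodes are on the successive wires -/
def OnCh (w : List ℕ) : ℕ → List ℕ → Prop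
  | _, [] => True
  | r, m :: ms => ValidNode w m ∧ NodeOnWire w m r ∧ OnCh w (otherWire w m r) ms

theorem TravelOK.onCh {w k} : ∀ {r a ms}, TravelOK w k r a ms → OnCh w r ms
  | _, _, [], _ => trivial
  | _, _, _ :: _, h => ⟨h.1, h.2.1, TravelOK.onCh h.2.2.2.2⟩

theorem wireSeq_cons (w r ms) : ∃ l, wireSeq w r ms = r :: l := by
  cases ms <;> exact ⟨_, rfl⟩

theorem wireSeq_real {n w T} (ar : Arr n w T) : ∀ {ms r}, 1 ≤ r → r ≤ n + 1 → OnCh w r ms →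
    ∀ x ∈ wireSeq w r ms, 1 ≤ x ∧ x ≤ n + 1
  | [], r, h1, h2, _ => by simp [wireSeq, h1, h2]
  | m :: ms, r, h1, h2, h => by
    have p := other_props ar h.1 h.2.1
    have ih := wireSeq_real ar p.2.2.1 p.2.2.2.1 h.2.2
    intro x hx
    simp only [wireSeq, List.mem_cons] at hx
    rcases hx with rfl | hx
    · exact ⟨h1, h2⟩
    · exact ih x hx

theorem seg_iff {n w T} (ar : Arr n w T) {k r p s} (hr1 : 1 ≤ r) (hr2 : r ≤ n + 1)
    (hb : bef T k r p s) :
    (∀ j ∈ segList w r (T r p) (T r s), ¬ Forbidden w k j r) ↔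
    ∀ x, 1 ≤ x → x ≤ n + 1 → x ≠ r → bef T k r p x → bef T k r x s → ¬ fb k r x := by
  constructor
  · intro h x x1 x2 x3 x4 x5
    obtain ⟨v, o, e⟩ := T_props ar hr1 hr2 x1 x2 (Ne.symm x3)
    have := h (T r x) ?_
    · rwa [forbidden_iff, e] at this
    · rw [mem_segList]
      refine ⟨⟨v, o⟩, ?_⟩
      unfold bef at *
      split_ifs at * <;> omega
  · intro h j hj
    rw [mem_segList] at hj
    obtain ⟨⟨v, o⟩, hj⟩ := hj
    have q := other_props ar v o
    rw [forbidden_iff]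
    refine h _ q.2.2.1 q.2.2.2.1 q.2.2.2.2.1 ?_ ?_
    · unfold bef at *
      rw [q.2.2.2.2.2.1]
      split_ifs at * <;> omega
    · unfold bef at *
      rw [q.2.2.2.2.2.1]
      split_ifs at * <;> omega

theorem tail_iff {n w T} (ar : Arr n w T) {k r p} (hr1 : 1 ≤ r) (hr2 : r ≤ n + 1) :
    (∀ j ∈ tailList w r (T r p), ¬ Forbidden w k j r) ↔
    ∀ x, 1 ≤ x → x ≤ n + 1 → x ≠ r → T r p < T r x → T r x < T r 0 → ¬ fb k r x := by
  constructor
  · intro h x x1 x2 x3 x4 x5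
    obtain ⟨v, o, e⟩ := T_props ar hr1 hr2 x1 x2 (Ne.symm x3)
    have := h (T r x) ?_
    · rwa [forbidden_iff, e] at this
    · rw [mem_tailList]
      exact ⟨⟨v, o⟩, x4⟩
  · intro h j hj
    rw [mem_tailList] at hj
    obtain ⟨⟨v, o⟩, hj⟩ := hj
    have q := other_props ar v o
    rw [forbidden_iff]
    refine h _ q.2.2.1 q.2.2.2.1 q.2.2.2.2.1 ?_ ?_
    · rw [q.2.2.2.2.2.1]; exact hj
    · exact ar.ax.bot _ _ hr1 hr2 q.2.2.1 q.2.2.2.1 (Ne.symm q.2.2.2.2.1)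

theorem travel_iff {n w T} (ar : Arr n w T) {k} : ∀ {ms r p}, 1 ≤ r → r ≤ n + 1 → 1 ≤ p → p ≤ n + 1 →
    p ≠ r → OnCh w r ms → (TravelOK w k r (T r p) ms ↔
      (wireSeq w r ms).getLast? = some (k + 1) ∧ OK3 (TOK n T k) (p :: (wireSeq w r ms ++ [0])))
  | [], r, p, r1, r2, p1, p2, hp, _ => by
    simp only [TravelOK, wireSeq, List.getLast?_singleton, Option.some.injEq, List.cons_append,
      List.nil_append, OK3, and_true]
    refine and_congr_right fun e => ?_
    rw [tail_iff ar r1 r2]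
    have hb : ∀ x y, bef T k r x y ↔ T r x < T r y := by
      intro x y; unfold bef; rw [if_neg (by omega)]
    unfold TOK
    simp only [hb]
    exact ⟨fun h => ⟨hp, by omega, ar.ax.bot _ _ r1 r2 p1 p2 (Ne.symm hp), h⟩, fun h => h.2.2.2⟩
  | m :: ms, r, p, r1, r2, p1, p2, hp, hc => by
    obtain ⟨v, o, hc⟩ := hc
    have q := other_props ar v o
    obtain ⟨l, hl⟩ := wireSeq_cons w (otherWire w m r) ms
    have ih := travel_iff ar (k := k) (ms := ms) (p := r) q.2.2.1 q.2.2.2.1 r1 r2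
      (Ne.symm q.2.2.2.2.1) hc
    rw [q.2.2.2.2.2.2] at ih
    simp only [TravelOK, wireSeq, ih]
    rw [hl]
    simp only [List.getLast?_cons_cons, List.cons_append, OK3]
    set s := otherWire w m r with hs
    have e := q.2.2.2.2.2.1
    have hbe : (if r ≤ k then m < T r p else T r p < m) ↔ bef T k r p s := by
      unfold bef; rw [e]
    rw [hbe]
    constructor
    · rintro ⟨_, _, h1, h2, h3, h4⟩
      rw [← e, seg_iff ar r1 r2 h1] at h2
      exact ⟨h3, ⟨hp, q.2.2.2.2.1, h1, h2⟩, h4⟩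
    · rintro ⟨h3, ⟨_, _, h1, h2⟩, h4⟩
      rw [← seg_iff ar r1 r2 h1, e] at h2
      exact ⟨v, o, h1, h2, h3, h4⟩

def nodeSeq (T : ℕ → ℕ → ℕ) : List ℕ → List ℕ
  | r :: s :: l => T r s :: nodeSeq T (s :: l)
  | _ => []

theorem nodeSeq_wireSeq {n w T} (ar : Arr n w T) : ∀ {ms r}, OnCh w r ms →
    nodeSeq T (wireSeq w r ms) = ms
  | [], r, _ => rfl
  | m :: ms, r, h => by
    have q := other_props ar h.1 h.2.1
    have ih := nodeSeq_wireSeq ar h.2.2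
    obtain ⟨l, hl⟩ := wireSeq_cons w (otherWire w m r) ms
    simp only [wireSeq]
    rw [hl] at ih ⊢
    simp only [nodeSeq]
    rw [ih, q.2.2.2.2.2.1]

/-- consecutive entries are distinct -/
theorem wireSeq_nodeSeq {n w T k} (ar : Arr n w T) : ∀ {l p r}, (∀ x ∈ r :: l, 1 ≤ x ∧ x ≤ n + 1) →
    OK3 (TOK n T k) (p :: (r :: l ++ [0])) →
    wireSeq w r (nodeSeq T (r :: l)) = r :: l ∧ OnCh w r (nodeSeq T (r :: l))
  | [], p, r, _, _ => ⟨rfl, trivial⟩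
  | s :: l, p, r, hr, h => by
    have hrs : r ≠ s := Ne.symm h.1.2.1
    have r0 := hr r (by simp)
    have s0 := hr s (by simp)
    obtain ⟨v, o, e⟩ := T_props ar r0.1 r0.2 s0.1 s0.2 hrs
    have ih := wireSeq_nodeSeq ar (l := l) (p := r) (r := s)
      (fun x hx => hr x (List.mem_cons_of_mem _ hx)) h.2
    simp only [nodeSeq, wireSeq, OnCh]
    rw [e]
    exact ⟨by rw [ih.1], v, o, ih.2⟩

theorem seg_nodup (w r a b) : (segList w r a b).Nodup := (nodesOn_nodup w r).filter _
theorem tail_nodup (w r a) : (tailList w r a).Nodup := (nodesOn_nodup w r).filter _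

theorem visitTail_nodup {n w T k} (ar : Arr n w T) (G : ℕ → ℕ)
    (hG : ∀ r j j', ValidNode w j → ValidNode w j' → NodeOnWire w j r → NodeOnWire w j' r →
      (if r ≤ k then j' < j else j < j') → G j < G j') :
    ∀ {ms r a}, ValidNode w a → NodeOnWire w a r → TravelOK w k r a ms →
      (visitTail w r a ms).Nodup ∧ ∀ j ∈ visitTail w r a ms, G a < G j
  | [], r, a, va, oa, h => by
    refine ⟨tail_nodup _ _ _, ?_⟩
    intro j hj
    simp only [visitTail, mem_tailList] at hj
    refine hG r a j va hj.1.1 oa hj.1.2 ?_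
    have := h.1
    rw [if_neg (by omega)]; exact hj.2
  | m :: ms, r, a, va, oa, h => by
    obtain ⟨vm, om, h1, _, h3⟩ := h
    have q := other_props ar vm om
    have om' : NodeOnWire w m (otherWire w m r) := (other_of_cr (Or.symm (cr_of_on om))).1
    obtain ⟨n1, n2⟩ := visitTail_nodup ar G hG vm om' h3
    have n3 : ∀ j ∈ segList w r a m, G a < G j ∧ G j < G m := by
      intro j hj
      rw [mem_segList] at hj
      refine ⟨hG r a j va hj.1.1 oa hj.1.2 ?_, hG r j m hj.1.1 vm hj.1.2 om ?_⟩
      · split_ifs at h1 ⊢ <;> omega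
      · split_ifs at h1 ⊢ <;> omega
    have n4 := hG r a m va vm oa om h1
    simp only [visitTail]
    constructor
    · rw [List.nodup_append]
      refine ⟨seg_nodup _ _ _ _, ?_, ?_⟩
      · rw [List.nodup_cons]
        exact ⟨fun hm => by have := n2 m hm; omega, n1⟩
      · intro x hx y hy
        have := n3 x hx
        rw [List.mem_cons] at hy
        rintro rfl
        rcases hy with rfl | hy
        · omega
        · have := n2 x hy; omega
    · intro j hj
      rw [List.mem_append, List.mem_cons] at hj
      rcases hj with hj | rfl | hj
      · exact (n3 j hj).1
      · exact n4
      · have := n2 j hj; omega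

theorem visitList_nodup {n w T k m ms} (ar : Arr n w T) (h1 : 1 ≤ k) (hk : k ≤ n) (v : ValidNode w m)
    (o : NodeOnWire w m k) (h : TravelOK w k (otherWire w m k) m ms) :
    (visitList w k (m :: ms)).Nodup := by
  obtain ⟨F, hs, hF⟩ := exists_F ar.ax k (by omega)
  have hG : ∀ r j j', ValidNode w j → ValidNode w j' → NodeOnWire w j r → NodeOnWire w j' r →
      (if r ≤ k then j' < j else j < j') → F (wireX w j) (wireY w j) < F (wireX w j') (wireY w j') := by
    intro r j j' v v' o o' hh
    have q := other_props ar v o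
    have q' := other_props ar v' o'
    have key : ∀ {j}, ValidNode w j → NodeOnWire w j r → F (wireX w j) (wireY w j) = F r (otherWire w j r) := by
      intro j v o
      have q := other_props ar v o
      rcases cr_of_on o with ⟨c1, c2⟩ | ⟨c1, c2⟩
      · rw [← c2, c1]
      · rw [c2, c1]
        exact hs _ _ q.2.2.1 q.2.2.2.1 q.1 q.2.1 q.2.2.2.2.1
    rw [key v o, key v' o']
    refine hF r _ _ q.1 q.2.1 q.2.2.1 q.2.2.2.1 q'.2.2.1 q'.2.2.2.1 q.2.2.2.2.1 q'.2.2.2.2.1 ?_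
    unfold bef
    rw [q.2.2.2.2.2.1, q'.2.2.2.2.2.1]
    exact hh
  have om' : NodeOnWire w m (otherWire w m k) := (other_of_cr (Or.symm (cr_of_on o))).1
  obtain ⟨n1, n2⟩ := visitTail_nodup ar _ hG v om' h
  have n3 : ∀ j ∈ tailList w k m, F (wireX w j) (wireY w j) < F (wireX w m) (wireY w m) := by
    intro j hj
    rw [mem_tailList] at hj
    refine hG k j m hj.1.1 v hj.1.2 o ?_
    rw [if_pos (le_refl _)]; exact hj.2
  simp only [visitList]
  rw [List.nodup_append]
  refine ⟨tail_nodup _ _ _, ?_, ?_⟩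
  · rw [List.nodup_cons]
    exact ⟨fun hm => by have := n2 m hm; omega, n1⟩
  · intro x hx y hy
    have := n3 x hx
    rw [List.mem_cons] at hy
    rintro rfl
    rcases hy with rfl | hy
    · omega
    · have := n2 x hy; omega

theorem gp_iff {n w T k m ms} (ar : Arr n w T) (hc : OnCh w k (m :: ms)) :
    IsGPPath n w k (m :: ms) ↔ IsP n T k (wireSeq w k (m :: ms)) := by
  obtain ⟨v, o, hc'⟩ := hc
  have q := other_props ar v o
  have ti := travel_iff ar (k := k) (ms := ms) (p := k) q.2.2.1 q.2.2.2.1 q.1 q.2.1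
    (Ne.symm q.2.2.2.2.1) hc'
  have ta := tail_iff ar (k := k) (r := k) (p := otherWire w m k) q.1 q.2.1
  rw [q.2.2.2.2.2.2] at ti
  rw [q.2.2.2.2.2.1] at ta
  obtain ⟨l, hl⟩ := wireSeq_cons w (otherWire w m k) ms
  have hreal := wireSeq_real ar (ms := m :: ms) (r := k) q.1 q.2.1 ⟨v, o, hc'⟩
  have hb : ∀ x y, bef T k k x y ↔ T k y < T k x := by
    intro x y; unfold bef; rw [if_pos (le_refl _)]
  unfold IsGPPath IsP
  simp only [ti, ta]
  constructor
  · rintro ⟨h1, h2, ⟨_, _, h3, h4, h5⟩, h6⟩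
    refine ⟨h1, h2, hreal, rfl, ?_, ?_⟩
    · simp only [wireSeq]
      rw [hl] at h4 ⊢
      rw [List.getLast?_cons_cons]; exact h4
    · simp only [wireSeq]
      rw [hl] at h5 ⊢
      refine ⟨⟨by omega, q.2.2.2.2.1, ?_, ?_⟩, h5⟩
      · rw [hb]
        exact ar.ax.bot _ _ q.1 q.2.1 q.2.2.1 q.2.2.2.1 (Ne.symm q.2.2.2.2.1)
      · intro x x1 x2 x3 x4 x5
        rw [hb] at x4 x5
        refine h3 x x1 x2 x3 ?_ x4
        rw [q.2.2.2.2.2.1] at x5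
        exact x5
  · rintro ⟨h1, h2, _, _, h3, h4⟩
    have h5 : (wireSeq w (otherWire w m k) ms).getLast? = some (k + 1) := by
      simp only [wireSeq] at h3
      rw [hl] at h3 ⊢
      rwa [List.getLast?_cons_cons] at h3
    have h6 : TOK n T k 0 k (otherWire w m k) ∧
        OK3 (TOK n T k) (k :: (wireSeq w (otherWire w m k) ms ++ [0])) := by
      simp only [wireSeq] at h4
      rw [hl] at h4 ⊢
      exact h4
    refine ⟨h1, h2, ⟨v, o, ?_, h5, h6.2⟩, ?_⟩
    · intro x x1 x2 x3 x4 x5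
      refine h6.1.2.2.2 x x1 x2 x3 ?_ ?_
      · rw [hb]; exact x5
      · rw [hb, q.2.2.2.2.2.1]; exact x4
    · exact visitList_nodup ar h1 h2 v o (ti.2 ⟨h5, h6.2⟩)

theorem IsGPPath.onCh {n w k ms} (h : IsGPPath n w k ms) : OnCh w k ms := by
  cases ms with
  | nil => trivial
  | cons m ms => exact ⟨h.2.2.1.1, h.2.2.1.2.1, h.2.2.1.2.2.2.onCh⟩

theorem PA_eq_image {n w T} (ar : Arr n w T) :
    PA n T = (fun p : ℕ × List ℕ => (p.1, wireSeq w p.1 p.2)) '' GP n w := by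
  ext ⟨k, c⟩
  constructor
  · intro h
    have hP : IsP n T k c := h
    obtain ⟨h1, h2, h3, h4, h5, h6⟩ := h
    simp only at h1 h2 h3 h4 h5 h6
    match c, hP, h3, h4, h5, h6 with
    | [], _, _, h4, _, _ => simp at h4
    | [a], _, _, h4, h5, _ => simp at h4 h5; omega
    | a :: b :: l, hP, h3, h4, h5, h6 =>
      simp only [List.head?_cons, Option.some.injEq] at h4
      subst h4
      have e := wireSeq_nodeSeq ar h3 h6
      refine ⟨(a, nodeSeq T (a :: b :: l)), ?_, ?_⟩
      · have e2 := e.2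
        have e1 := e.1
        simp only [nodeSeq] at e1 e2
        show IsGPPath n w a (nodeSeq T (a :: b :: l))
        simp only [nodeSeq]
        rw [gp_iff ar e2, e1]
        exact hP
      · simp only [e.1]
  · rintro ⟨⟨k, ms⟩, h, e⟩
    simp only [Prod.mk.injEq] at e
    obtain ⟨rfl, rfl⟩ := e
    have h : IsGPPath n w k ms := h
    show IsP n T k _
    cases ms with
    | nil => exact h.2.2.1.elim
    | cons m ms => exact (gp_iff ar h.onCh).1 h

theorem numGP_eq {n w T} (ar : Arr n w T) : numGP n w = (PA n T).ncard := by
  rw [PA_eq_image ar, Set.InjOn.ncard_image]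
  · rfl
  · rintro ⟨k, ms⟩ h ⟨k', ms'⟩ h' e
    simp only [Prod.mk.injEq] at e
    obtain ⟨rfl, e⟩ := e
    have h : IsGPPath n w k ms := h
    have h' : IsGPPath n w k ms' := h'
    rw [← nodeSeq_wireSeq ar h.onCh, e, nodeSeq_wireSeq ar h'.onCh]

theorem visitTail_mem {w : List ℕ} : ∀ {ms : List ℕ} {r a : ℕ}, ms.Sublist (visitTail w r a ms)
  | [], _, _ => List.nil_sublist _
  | m :: ms, r, a => by
    simp only [visitTail]
    exact (List.Sublist.cons_cons m visitTail_mem).trans (List.sublist_append_right _ _)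

theorem onCh_valid {w : List ℕ} : ∀ {ms r}, OnCh w r ms → ∀ m ∈ ms, ValidNode w m
  | [], _, _ => by simp
  | m :: ms, r, h => by
    intro x hx
    rw [List.mem_cons] at hx
    rcases hx with rfl | hx
    · exact h.1
    · exact onCh_valid h.2.2 x hx

theorem GP_finite (n w) : (GP n w).Finite := by
  have hfin : {l : List ℕ | l.Nodup ∧ ∀ m ∈ l, m ∈ Finset.range (w.length + 1)}.Finite := by
    have : {l : List (Fin (w.length + 1)) | l.length ≤ w.length + 1}.Finite :=
      List.finite_length_le _ _
    refine (this.image (fun l => l.map Fin.val)).subset ?_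
    rintro l ⟨h1, h2⟩
    refine ⟨l.pmap (fun m hm => ⟨m, by simpa using hm⟩) h2, ?_, ?_⟩
    · simp only [Set.mem_ofPred_eq, List.length_pmap]
      have := List.toFinset_card_of_nodup h1
      rw [← this]
      refine (Finset.card_le_card (t := Finset.range (w.length + 1)) ?_).trans (by simp)
      intro x hx
      exact h2 x (by simpa using hx)
    · simp [List.map_pmap]
  refine ((Set.finite_Iic n).prod hfin).subset ?_
  rintro ⟨k, ms⟩ h
  have h : IsGPPath n w k ms := h
  refine ⟨h.2.1, ?_, ?_⟩
  · cases ms with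
    | nil => simp
    | cons m ms =>
      refine List.Sublist.nodup ?_ h.2.2.2
      simp only [visitList]
      exact (List.Sublist.cons_cons m visitTail_mem).trans (List.sublist_append_right _ _)
  · intro m hm
    have := onCh_valid h.onCh m hm
    have := this.2
    simp only [Finset.mem_range]
    omega

theorem Arr.finite {n w T} (ar : Arr n w T) : (PA n T).Finite := by
  rw [PA_eq_image ar]
  exact (GP_finite n w).image _

/-! ### Two-moves -/

theorem wireX_split (u v : List ℕ) (a : ℕ) : wireX (u ++ a :: v) (u.length + 1) = wordProd u a := by
  simp [wireX, stateAbove, letterAt, List.take_append]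

theorem wireY_split (u v : List ℕ) (a : ℕ) :
    wireY (u ++ a :: v) (u.length + 1) = wordProd u (a + 1) := by
  simp [wireY, stateAbove, letterAt, List.take_append]

theorem valid_split {w j} (h : ValidNode w j) : ∃ u a v, w = u ++ a :: v ∧ j = u.length + 1 := by
  obtain ⟨h1, h2⟩ := h
  refine ⟨w.take (j - 1), w[j - 1]'(by omega), w.drop (j - 1 + 1), ?_, ?_⟩
  · rw [← List.drop_eq_getElem_cons, List.take_append_drop]
  · rw [List.length_take]; omega

/-- nodes of different words with the same wires -/
def SameW (w : List ℕ) (j : ℕ) (w' : List ℕ) (j' : ℕ) : Prop :=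
  wireX w j = wireX w' j' ∧ wireY w j = wireY w' j'

theorem SameW.cr {w j w' j' r s} (h : SameW w j w' j') : Cr w j r s ↔ Cr w' j' r s := by
  unfold Cr; rw [h.1, h.2]

theorem sameW_split {u v u' v' : List ℕ} {a a' : ℕ} (h1 : wordProd u a = wordProd u' a')
    (h2 : wordProd u (a + 1) = wordProd u' (a' + 1)) :
    SameW (u ++ a :: v) (u.length + 1) (u' ++ a' :: v') (u'.length + 1) := by
  unfold SameW
  rw [wireX_split, wireY_split, wireX_split, wireY_split]
  exact ⟨h1, h2⟩

theorem sTrans_comm {a b : ℕ} (h : a + 1 < b ∨ b + 1 < a) : sTrans a * sTrans b = sTrans b * sTrans a := by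
  ext x
  simp only [Equiv.Perm.mul_apply, sTrans_apply]
  split_ifs <;> omega

def sw (p j : ℕ) : ℕ := if j = p + 1 then p + 2 else if j = p + 2 then p + 1 else j

theorem sw_sw (p j) : sw p (sw p j) = j := by unfold sw; split_ifs <;> omega

theorem twoMove_same {u v : List ℕ} {a b j} (h : a + 1 < b ∨ b + 1 < a)
    (hj : ValidNode (u ++ a :: b :: v) j) :
    ValidNode (u ++ b :: a :: v) (sw u.length j) ∧
      SameW (u ++ a :: b :: v) j (u ++ b :: a :: v) (sw u.length j) := by
  constructor
  · unfold ValidNode sw at *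
    simp only [List.length_append, List.length_cons] at *
    split_ifs <;> omega
  · have hj2 := hj.2
    simp only [List.length_append, List.length_cons] at hj2
    have hj1 := hj.1
    by_cases c1 : j ≤ u.length
    · obtain ⟨u1, c, u2, rfl, rfl⟩ := valid_split (w := u) ⟨hj.1, c1⟩
      have : sw (u1 ++ c :: u2).length (u1.length + 1) = u1.length + 1 := by
        unfold sw; rw [if_neg (by omega), if_neg (by omega)]
      rw [this, List.append_assoc, List.append_assoc, List.cons_append, List.cons_append]
      exact sameW_split rfl rfl
    · by_cases c2 : j = u.length + 1
      · subst c2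
        have := sameW_split (u := u) (v := b :: v) (u' := u ++ [b]) (v' := v) (a := a) (a' := a) ?_ ?_
        · simpa [sw, List.append_assoc] using this
        · rw [wordProd_append, wordProd_cons, wordProd_nil, mul_one, Equiv.Perm.mul_apply, sTrans_apply,
            if_neg (by omega), if_neg (by omega)]
        · rw [wordProd_append, wordProd_cons, wordProd_nil, mul_one, Equiv.Perm.mul_apply, sTrans_apply,
            if_neg (by omega), if_neg (by omega)]
      · by_cases c3 : j = u.length + 2
        · subst c3
          have := sameW_split (u := u ++ [a]) (v := v) (u' := u) (v' := a :: v) (a := b) (a' := b) ?_ ?_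
          · simpa [sw, List.append_assoc] using this
          · rw [wordProd_append, wordProd_cons, wordProd_nil, mul_one, Equiv.Perm.mul_apply, sTrans_apply,
              if_neg (by omega), if_neg (by omega)]
          · rw [wordProd_append, wordProd_cons, wordProd_nil, mul_one, Equiv.Perm.mul_apply, sTrans_apply,
              if_neg (by omega), if_neg (by omega)]
        · obtain ⟨v1, c, v2, rfl, e⟩ := valid_split (w := v) (j := j - u.length - 2)
            ⟨by omega, by omega⟩
          have e1 : sw u.length j = j := by
            unfold sw; rw [if_neg (by omega), if_neg (by omega)]
          rw [e1]
          have e2 : wordProd (u ++ a :: b :: v1) = wordProd (u ++ b :: a :: v1) := by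
            simp only [wordProd_append, wordProd_cons]
            rw [← mul_assoc (sTrans a), sTrans_comm h, mul_assoc]
          have := sameW_split (u := u ++ a :: b :: v1) (v := v2) (u' := u ++ b :: a :: v1) (v' := v2)
            (a := c) (a' := c) (by rw [e2]) (by rw [e2])
          simp only [List.length_append, List.length_cons, List.append_assoc, List.cons_append] at this
          have e3 : j = u.length + (v1.length + 1 + 1) + 1 := by omega
          rw [e3]
          exact this

theorem Arr.twoMove {n w w' T} (ar : Arr n w T) (h : TwoMoveStep w w') :
    ∃ T', Arr n w' T' ∧ OrdEq n T T' := by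
  obtain ⟨u, v, a, b, hab, rfl, rfl⟩ := h
  have hlen : ∀ r, T r 0 = u.length + v.length + 3 := by
    intro r; rw [ar.bot]; simp; omega
  refine ⟨fun r s => sw u.length (T r s), ⟨?_, ?_, ?_, ?_⟩, ?_⟩
  · intro x hx
    refine ar.lett x ?_
    simp only [List.mem_append, List.mem_cons] at hx ⊢
    tauto
  · intro r s h1 h2 h3 h4 h5
    obtain ⟨vn, c⟩ := ar.cross r s h1 h2 h3 h4 h5
    obtain ⟨e1, e2⟩ := twoMove_same hab vn
    exact ⟨e1, e2.cr.1 c⟩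
  · intro j r s vj c
    obtain ⟨e1, e2⟩ := twoMove_same hab.symm vj
    simp only [ar.node _ r s e1 (e2.cr.1 c), sw_sw]
  · intro r
    have e := hlen r
    show sw _ (T r 0) = _
    rw [e]
    unfold sw
    rw [if_neg (by omega), if_neg (by omega)]
    simp; omega
  · intro r x y h1 h2 h3 h4 h5 h6
    have key : ∀ x y, x ≤ n + 1 → y ≤ n + 1 → x ≠ r → y ≠ r →
        ¬ (T r x = u.length + 1 ∧ T r y = u.length + 2) := by
      rintro x y hx hy hxr hyr ⟨ex, ey⟩
      have x1 : 1 ≤ x := by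
        rcases Nat.eq_zero_or_pos x with rfl | h
        · rw [hlen] at ex; omega
        · exact h
      have y1 : 1 ≤ y := by
        rcases Nat.eq_zero_or_pos y with rfl | h
        · rw [hlen] at ey; omega
        · exact h
      have cx := (ar.cross r x h1 h2 x1 hx (Ne.symm hxr)).2
      have cy := (ar.cross r y h1 h2 y1 hy (Ne.symm hyr)).2
      rw [ex] at cx
      rw [ey] at cy
      unfold Cr at cx cy
      rw [wireX_split, wireY_split] at cx
      have s1 := wireX_split (u ++ [a]) v b
      have s2 := wireY_split (u ++ [a]) v b
      simp only [List.append_assoc, List.cons_append, List.nil_append, List.length_append,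
        List.length_cons, List.length_nil] at s1 s2
      rw [s1, s2] at cy
      simp only [wordProd_append, wordProd_cons, wordProd_nil, mul_one, Equiv.Perm.mul_apply] at cy
      rw [sTrans_apply, if_neg (by omega), if_neg (by omega), sTrans_apply, if_neg (by omega),
        if_neg (by omega)] at cy
      have inj : ∀ p q, wordProd u p = r → wordProd u q = r → p = q := fun p q hp hq =>
        (wordProd u).injective (hp.trans hq.symm)
      rcases cx with ⟨c1, _⟩ | ⟨_, c1⟩ <;> rcases cy with ⟨d1, _⟩ | ⟨_, d1⟩ <;>
        (have := inj _ _ c1 d1; omega)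
    have k1 := key x y h3 h4 h5 h6
    have k2 := key y x h4 h3 h6 h5
    simp only [sw]
    split_ifs <;> omega

theorem Arr.equiv {n w w' T} (ar : Arr n w T) (h : TwoMoveEquiv w w') :
    ∃ T', Arr n w' T' ∧ OrdEq n T T' := by
  unfold TwoMoveEquiv at h
  induction h with
  | refl => exact ⟨T, ar, OrdEq.refl n T⟩
  | tail _ hs ih =>
    obtain ⟨T1, a1, o1⟩ := ih
    obtain ⟨T2, a2, o2⟩ := a1.twoMove hs
    exact ⟨T2, a2, o1.trans o2⟩

/-! ### Reflection of words -/

def reflW (n : ℕ) (w : List ℕ) : List ℕ := w.map (fun a => n + 1 - a)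

theorem wordProd_reflW {n} : ∀ {w : List ℕ}, Letters n w → ∀ x,
    wordProd (reflW n w) x = flip n (wordProd w (flip n x))
  | [], _, x => by simp [reflW, wordProd_nil, flip_flip]
  | a :: w, hw, x => by
    have ih := wordProd_reflW (w := w) (fun b hb => hw b (List.mem_cons_of_mem _ hb)) x
    have ha := hw a (by simp)
    simp only [reflW, List.map_cons, wordProd_cons, Equiv.Perm.mul_apply] at ih ⊢
    rw [ih, sTrans_apply, sTrans_apply]
    generalize wordProd w (flip n x) = y
    unfold flip
    split_ifs <;> omega

theorem letterAt_reflW {n w j} (hj : ValidNode w j) : letterAt (reflW n w) j = n + 1 - letterAt w j := by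
  obtain ⟨h1, h2⟩ := hj
  unfold letterAt reflW
  rw [List.getD_eq_getElem _ _ (by simp; omega), List.getD_eq_getElem _ _ (by omega)]
  simp

theorem cr_reflW {n w j r s} (hw : Letters n w) (hj : ValidNode w j) :
    Cr (reflW n w) j r s ↔ Cr w j (flip n r) (flip n s) := by
  have ha := hw _ (letterAt_mem hj)
  have e : (reflW n w).take (j - 1) = reflW n (w.take (j - 1)) := by simp [reflW]
  have hx : wireX (reflW n w) j = flip n (wireY w j) := by
    unfold wireX wireY stateAbove
    rw [e, wordProd_reflW (hw.take _), letterAt_reflW hj, flip_real (n := n) (r := n + 1 - letterAt w j) (by omega) (by omega)]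
    congr 2; omega
  have hy : wireY (reflW n w) j = flip n (wireX w j) := by
    unfold wireX wireY stateAbove
    rw [e, wordProd_reflW (hw.take _), letterAt_reflW hj, flip_real (n := n) (r := n + 1 - letterAt w j + 1) (by omega) (by omega)]
    congr 2; omega
  have hf : ∀ x y, flip n x = y ↔ x = flip n y := fun x y =>
    ⟨fun h => by rw [← h, flip_flip], fun h => by rw [h, flip_flip]⟩
  unfold Cr
  rw [hx, hy]
  simp only [hf]
  tauto

theorem Arr.refl {n w T} (ar : Arr n w T) : Arr n (reflW n w) (flipT n T) := by
  have hlen : (reflW n w).length = w.length := by simp [reflW]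
  have hv : ∀ j, ValidNode (reflW n w) j ↔ ValidNode w j := by
    intro j; unfold ValidNode; rw [hlen]
  refine ⟨?_, ?_, ?_, ?_⟩
  · intro a ha
    simp only [reflW, List.mem_map] at ha
    obtain ⟨b, hb, rfl⟩ := ha
    have := ar.lett b hb
    omega
  · intro r s h1 h2 h3 h4 h5
    have f1 := flip_real h1 h2
    have f2 := flip_real h3 h4
    obtain ⟨v, c⟩ := ar.cross (flip n r) (flip n s) (by omega) (by omega) (by omega) (by omega) (by omega)
    exact ⟨(hv _).2 v, (cr_reflW ar.lett v).2 c⟩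
  · intro j r s v c
    rw [hv] at v
    rw [cr_reflW ar.lett v] at c
    exact ar.node j _ _ v c
  · intro r
    unfold flipT
    rw [flip_zero, ar.bot, hlen]

theorem reflW_asc (n : ℕ) : reflW n (ascWord n) = descWord n := by
  unfold reflW descWord ascWord
  apply List.ext_getElem
  · simp
  · intro i h1 h2
    simp at h1 h2 ⊢
    omega

/-! ### The D-contraction -/

theorem descWord_succ (n : ℕ) : descWord (n + 1) = (n + 1) :: descWord n := by
  simp [descWord, ascWord, List.range_succ]

theorem descWord_length (n : ℕ) : (descWord n).length = n := by simp [descWord, ascWord]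

theorem wordProd_desc : ∀ (n c : ℕ), wordProd (descWord n) c =
    if c = 1 then n + 1 else if 2 ≤ c ∧ c ≤ n + 1 then c - 1 else c
  | 0, c => by
    simp only [descWord, ascWord, List.range_zero, List.map_nil, List.reverse_nil, wordProd_nil,
      Equiv.Perm.one_apply]
    split_ifs <;> omega
  | n + 1, c => by
    rw [descWord_succ, wordProd_cons, Equiv.Perm.mul_apply, wordProd_desc n c, sTrans_apply]
    split_ifs <;> omega

theorem wordProd_shift : ∀ {v : List ℕ}, (∀ c ∈ v, 2 ≤ c) → ∀ {c}, 2 ≤ c →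
    2 ≤ wordProd v c ∧ wordProd (v.map (· - 1)) (c - 1) = wordProd v c - 1
  | [], _, c, hc => by simp [wordProd_nil, hc]
  | a :: v, hv, c, hc => by
    have ih := wordProd_shift (v := v) (fun b hb => hv b (List.mem_cons_of_mem _ hb)) hc
    have ha := hv a (by simp)
    simp only [List.map_cons, wordProd_cons, Equiv.Perm.mul_apply]
    rw [ih.2]
    have h2 := ih.1
    generalize wordProd v c = y at *
    simp only [sTrans_apply]
    split_ifs <;> omega

theorem letterAt_split (u v : List ℕ) (a : ℕ) : letterAt (u ++ a :: v) (u.length + 1) = a := by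
  simp [letterAt]

theorem letterAt_mid {n u v m} (hm : m < n) :
    letterAt (u ++ descWord n ++ v) (u.length + m + 1) = n - m := by
  unfold letterAt
  rw [List.getD_eq_getElem _ _ (by simp [descWord_length]; omega)]
  simp only [Nat.add_sub_cancel]
  rw [List.getElem_append_left (by simp [descWord_length]; omega),
    List.getElem_append_right (by omega)]
  simp [descWord, ascWord]
  omega

section
variable {n : ℕ} {u v : List ℕ} {T : ℕ → ℕ → ℕ}

theorem pos_mid (z : ℕ) (hz : z = wordProd u (n + 1)) : ∀ m, m ≤ n →
    pos (u ++ descWord n ++ v) (u.length + m) z = n + 1 - m := by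
  intro m
  induction m with
  | zero =>
    intro _
    simp [pos, hz]
  | succ m ih =>
    intro hm
    rw [← Nat.add_assoc, pos_succ (by simp [descWord_length]; omega), letterAt_mid (by omega),
      ih (by omega), sTrans_apply]
    split_ifs <;> omega

theorem top_eq (hn : 1 ≤ n) (ar : Arr n (u ++ descWord n ++ v) T) : wordProd u (n + 1) = n + 1 := by
  have hu : Letters n u := fun a ha => ar.lett a (by simp [ha])
  obtain ⟨h1, h2⟩ := wordProd_range hu (x := n + 1) (by omega) le_rfl
  by_contra hne
  have e := pos_mid (v := v) (n := n) _ rfl (u := u)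
  generalize wordProd u (n + 1) = z at *
  have p0 := e 0 (by omega)
  have p1 := e n le_rfl
  have o0 := ar.ord h1 (by omega : z < n + 1) le_rfl (u.length + 0) (by simp)
  have o1 := ar.ord h1 (by omega : z < n + 1) le_rfl (u.length + n) (by simp [descWord_length])
  have r0 := pos_range ar.lett (u.length + 0) (r := n + 1) (by omega) le_rfl
  have r1 := pos_range ar.lett (u.length + n) (r := n + 1) (by omega) le_rfl
  have ne : pos (u ++ descWord n ++ v) (u.length + n) z ≠
    pos (u ++ descWord n ++ v) (u.length + n) (n + 1) := fun h => hne (pos_inj h)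
  omega

theorem f1 (hn : 1 ≤ n) (ar : Arr n (u ++ descWord n ++ v) T) {s} (h1 : 1 ≤ s) (h2 : s ≤ n) :
    u.length < T s (n + 1) ∧ T s (n + 1) ≤ u.length + n := by
  have e := pos_mid (v := v) (n := n) (n + 1) (top_eq hn ar).symm
  have p0 := e 0 (by omega)
  have p1 := e n le_rfl
  have o0 := ar.ord h1 (by omega : s < n + 1) le_rfl (u.length + 0) (by simp)
  have o1 := ar.ord h1 (by omega : s < n + 1) le_rfl (u.length + n) (by simp [descWord_length])
  have r0 := pos_range ar.lett (u.length + 0) h1 (by omega)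
  have r1 := pos_range ar.lett (u.length + n) h1 (by omega)
  have ne : pos (u ++ descWord n ++ v) (u.length + 0) s ≠
    pos (u ++ descWord n ++ v) (u.length + 0) (n + 1) := fun h => by have := pos_inj h; omega
  omega

theorem f2 (hn : 1 ≤ n) (ar : Arr n (u ++ descWord n ++ v) T) {j r s} (h1 : u.length < j)
    (h2 : j ≤ u.length + n) (hc : Cr (u ++ descWord n ++ v) j r s) : r = n + 1 ∨ s = n + 1 := by
  obtain ⟨m, rfl⟩ : ∃ m, j = u.length + m + 1 := ⟨j - u.length - 1, by omega⟩
  have e := pos_mid (v := v) (n := n) (n + 1) (top_eq hn ar).symm m (by omega)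
  have : wireY (u ++ descWord n ++ v) (u.length + m + 1) = n + 1 := by
    rw [wireY_iff, letterAt_mid (by omega), Nat.add_sub_cancel, e]
    omega
  unfold Cr at hc
  omega

theorem f3 (hn : 1 ≤ n) (ar : Arr n (u ++ descWord n ++ v) T) {r s} (h1 : 1 ≤ r) (h2 : r ≤ n)
    (h3 : 1 ≤ s) (h4 : s ≤ n) (h5 : r ≠ s) : T r s ≤ u.length ∨ u.length + n < T r s := by
  by_contra h
  have := f2 hn ar (by omega) (by omega) (ar.cross r s h1 (by omega) h3 (by omega) h5).2
  omega

theorem nodes_low (hn : 1 ≤ n) (ar : Arr n (u ++ descWord n ++ v) T) {j r s}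
    (hj : ValidNode (u ++ descWord n ++ v) j) (h : j ≤ u.length ∨ u.length + n < j)
    (hc : Cr (u ++ descWord n ++ v) j r s) : 1 ≤ r ∧ r ≤ n ∧ 1 ≤ s ∧ s ≤ n ∧ r ≠ s := by
  have hx := wireX_range ar.lett hj
  have hy := wireY_range ar.lett hj
  have hne := wireX_ne_wireY (u ++ descWord n ++ v) j
  have ht := ar.node j r s hj hc
  unfold Cr at hc
  have hr : 1 ≤ r ∧ r ≤ n + 1 ∧ 1 ≤ s ∧ s ≤ n + 1 ∧ r ≠ s := by omega
  have hs : s ≠ n + 1 := by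
    rintro rfl
    have := f1 hn ar (s := r) (by omega) (by omega)
    omega
  have hr' : r ≠ n + 1 := by
    rintro rfl
    have := f1 hn ar (s := s) (by omega) (by omega)
    rw [ar.sym (by omega) (by omega) (by omega) (by omega)] at ht
    omega
  omega

theorem u_lett (hn : 1 ≤ n) (ar : Arr n (u ++ descWord n ++ v) T) {c} (hc : c ∈ u) : c ≤ n - 1 := by
  have hl := ar.lett c (by simp [hc])
  by_contra hcn
  obtain rfl : c = n := by omega
  obtain ⟨u1, u2, rfl⟩ := List.append_of_mem hc
  have e : u1 ++ c :: u2 ++ descWord c ++ v = u1 ++ c :: (u2 ++ descWord c ++ v) := by simp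
  set w := u1 ++ c :: u2 ++ descWord c ++ v with hw
  have la : letterAt w (u1.length + 1) = c := by rw [e, letterAt_split]
  have vn : ValidNode w (u1.length + 1) := ⟨by omega, by rw [e]; simp⟩
  have hlow := nodes_low hn ar vn (Or.inl (by simp)) (Or.inl ⟨rfl, rfl⟩)
  rw [← hw] at hlow
  have hp : pos w u1.length (wireY w (u1.length + 1)) = c + 1 := by
    have := (wireY_iff (w := w) (j := u1.length + 1) (r := _)).1 rfl
    rw [la] at this
    exact this
  have hf := f1 hn ar hlow.2.2.1 hlow.2.2.2.1
  have ho := ar.ord hlow.2.2.1 (by omega : wireY w (u1.length + 1) < c + 1) le_rfl u1.length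
    (by have := vn.2; omega)
  have hr := pos_range ar.lett u1.length (r := c + 1) (by omega) le_rfl
  simp only [List.length_append, List.length_cons] at hf
  omega

theorem v_lett (hn : 1 ≤ n) (ar : Arr n (u ++ descWord n ++ v) T) {c} (hc : c ∈ v) : 2 ≤ c := by
  have hl := ar.lett c (by simp [hc])
  by_contra hcn
  obtain rfl : c = 1 := by omega
  obtain ⟨v1, v2, rfl⟩ := List.append_of_mem hc
  have e : u ++ descWord n ++ (v1 ++ 1 :: v2) = (u ++ descWord n ++ v1) ++ 1 :: v2 := by simp
  set w := u ++ descWord n ++ (v1 ++ 1 :: v2) with hw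
  have hj : (u ++ descWord n ++ v1).length = u.length + n + v1.length := by
    simp [descWord_length, Nat.add_assoc]
  have la : letterAt w (u.length + n + v1.length + 1) = 1 := by rw [← hj, e, letterAt_split]
  have vn : ValidNode w (u.length + n + v1.length + 1) := ⟨by omega, by rw [e, ← hj]; simp⟩
  have hlow := nodes_low hn ar vn (Or.inr (by omega)) (Or.inl ⟨rfl, rfl⟩)
  rw [← hw] at hlow
  have hle : u.length + n ≤ u.length + n + v1.length := by omega
  generalize u.length + n + v1.length = h at *
  have hp : pos w h (wireX w (h + 1)) = 1 := by
    have := (wireX_iff (w := w) (j := h + 1) (r := _)).1 rfl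
    rw [la] at this
    exact this
  have hf := f1 hn ar hlow.1 hlow.2.1
  have ho := ar.ord hlow.1 (by omega : wireX w (h + 1) < n + 1) le_rfl h
    (by have := vn.2; omega)
  have hr := pos_range ar.lett h (r := n + 1) (by omega) le_rfl
  have ne : pos w h (wireX w (h + 1)) ≠ pos w h (n + 1) := fun e => by have := pos_inj e; omega
  omega

theorem same_left {j} (h1 : 1 ≤ j) (h2 : j ≤ u.length) :
    SameW (u ++ descWord n ++ v) j (u ++ v.map (· - 1)) j := by
  obtain ⟨u1, c, u2, rfl, rfl⟩ := valid_split (w := u) ⟨h1, h2⟩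
  simp only [List.append_assoc, List.cons_append]
  exact sameW_split rfl rfl

theorem same_right (hv : ∀ c ∈ v, 2 ≤ c) (hl : Letters n (u ++ descWord n ++ v)) {j}
    (h1 : u.length < j) (h2 : j ≤ u.length + v.length) :
    SameW (u ++ descWord n ++ v) (j + n) (u ++ v.map (· - 1)) j := by
  obtain ⟨v1, c, v2, rfl, e⟩ := valid_split (w := v) (j := j - u.length) ⟨by omega, by omega⟩
  have hc := hv c (by simp)
  have hc2 := hl c (by simp)
  have key : ∀ d, 2 ≤ d → d ≤ n + 1 →
      wordProd (u ++ descWord n ++ v1) d = wordProd (u ++ v1.map (· - 1)) (d - 1) := by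
    intro d hd hdn
    have s := wordProd_shift (v := v1) (fun b hb => hv b (by simp [hb])) hd
    have r := wordProd_range (w := v1) (n := n) (fun b hb => hl b (by simp [hb])) (x := d) (by omega) hdn
    simp only [wordProd_append, Equiv.Perm.mul_apply]
    rw [s.2, wordProd_desc, if_neg (by omega), if_pos (by omega)]
  have k1 := key c hc (by omega)
  have k2 := key (c + 1) (by omega) (by omega)
  have := sameW_split (u := u ++ descWord n ++ v1) (v := v2) (u' := u ++ v1.map (· - 1))
    (v' := v2.map (· - 1)) (a := c) (a' := c - 1) k1 (by rw [k2]; congr 1; omega)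
  simp only [List.length_append, List.length_map, descWord_length] at this
  have e1 : u.length + n + v1.length + 1 = j + n := by omega
  have e2 : u.length + v1.length + 1 = j := by omega
  rw [e1, e2] at this
  simpa using this

theorem contrD (hn : 1 ≤ n) (ar : Arr n (u ++ descWord n ++ v) T) :
    ∃ T', Arr (n - 1) (u ++ v.map (· - 1)) T' ∧ OrdEq (n - 1) T T' := by
  have hv : ∀ c ∈ v, 2 ≤ c := fun c hc => v_lett hn ar hc
  have hN : (u ++ descWord n ++ v).length = u.length + n + v.length := by simp [descWord_length, Nat.add_assoc]
  have hN' : (u ++ v.map (· - 1)).length = u.length + v.length := by simp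
  refine ⟨fun r s => if T r s ≤ u.length then T r s else T r s - n, ⟨?_, ?_, ?_, ?_⟩, ?_⟩
  · intro a ha
    simp only [List.mem_append, List.mem_map] at ha
    rcases ha with ha | ⟨b, hb, rfl⟩
    · have := u_lett hn ar ha
      have := ar.lett a (by simp [ha])
      omega
    · have := hv b hb
      have := ar.lett b (by simp [hb])
      omega
  · intro r s h1 h2 h3 h4 h5
    obtain ⟨vn, c⟩ := ar.cross r s h1 (by omega) h3 (by omega) h5
    have h := f3 hn ar h1 (by omega) h3 (by omega) h5
    unfold ValidNode at *
    rw [hN] at vn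
    rw [hN']
    by_cases hle : T r s ≤ u.length
    · simp only [if_pos hle]
      exact ⟨by omega, (same_left (by omega) hle).cr.1 c⟩
    · simp only [if_neg hle]
      refine ⟨by omega, (same_right hv ar.lett (j := T r s - n) (by omega) (by omega)).cr.1 ?_⟩
      rw [Nat.sub_add_cancel (by omega)]
      exact c
  · intro j r s vj c
    unfold ValidNode at vj
    rw [hN'] at vj
    by_cases hle : j ≤ u.length
    · have := ar.node j r s ⟨by omega, by omega⟩ ((same_left (by omega) hle).cr.2 c)
      simp only [this, if_pos hle]
    · have := ar.node (j + n) r s ⟨by omega, by omega⟩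
        ((same_right hv ar.lett (by omega) (by omega)).cr.2 c)
      simp only [this]
      rw [if_neg (by omega)]
      omega
  · intro r
    have := ar.bot r
    simp only [this]
    rw [if_neg (by omega), hN, hN']
    omega
  · intro r x y h1 h2 h3 h4 h5 h6
    have key : ∀ x, x ≤ n - 1 + 1 → x ≠ r → T r x ≤ u.length ∨ u.length + n < T r x := by
      intro x hx hxr
      rcases Nat.eq_zero_or_pos x with rfl | hp
      · right; rw [ar.bot, hN]; omega
      · exact f3 hn ar h1 (by omega) hp (by omega) (Ne.symm hxr)
    have k1 := key x h3 h5
    have k2 := key y h4 h6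
    simp only []
    split_ifs <;> omega

theorem exists_descent {f : ℕ → ℕ} {a : ℕ} : ∀ b, a < b → f b < f a → ∃ m, a ≤ m ∧ m < b ∧ f (m + 1) < f m := by
  intro b
  induction b with
  | zero => intro h; omega
  | succ b ih =>
    intro h1 h2
    by_cases h : f (b + 1) < f b
    · exact ⟨b, by omega, by omega, h⟩
    · rcases Nat.lt_or_ge a b with h3 | h3
      · obtain ⟨m, x, y, z⟩ := ih h3 (by omega)
        exact ⟨m, x, by omega, z⟩
      · obtain rfl : a = b := by omega
        omega

theorem descD (hn : 1 ≤ n) (ar : Arr n (u ++ descWord n ++ v) T) (hv : v ≠ []) :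
    ∃ m, 1 ≤ m ∧ m < n ∧ T (n + 1) (m + 1) < T (n + 1) m := by
  have hN : (u ++ descWord n ++ v).length = u.length + n + v.length := by simp [descWord_length, Nat.add_assoc]
  have hv' := List.length_pos_of_ne_nil hv
  have main : ∀ a b, Cr (u ++ descWord n ++ v) (u ++ descWord n ++ v).length a b → a < b →
      ∃ m, 1 ≤ m ∧ m < n ∧ T (n + 1) (m + 1) < T (n + 1) m := by
    intro a b hc hab
    have vn : ValidNode (u ++ descWord n ++ v) (u ++ descWord n ++ v).length := ⟨by omega, le_rfl⟩
    have hlow := nodes_low hn ar vn (Or.inr (by omega)) hc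
    have ht := ar.node _ a b vn hc
    have fa := f1 hn ar (s := a) (by omega) (by omega)
    have tri := ar.ax.tri a b (n + 1) (by omega) hab (by omega) le_rfl
    have sa := ar.sym (r := a) (s := n + 1) (by omega) (by omega) (by omega) (by omega)
    have sb := ar.sym (r := b) (s := n + 1) (by omega) (by omega) (by omega) (by omega)
    obtain ⟨m, x, y, z⟩ := exists_descent (f := T (n + 1)) (a := a) b hab (by omega)
    exact ⟨m, by omega, by omega, z⟩
  have hne := wireX_ne_wireY (u ++ descWord n ++ v) (u ++ descWord n ++ v).length
  rcases Nat.lt_or_gt_of_ne hne with h | h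
  · exact main _ _ (Or.inl ⟨rfl, rfl⟩) h
  · exact main _ _ (Or.inr ⟨rfl, rfl⟩) h

end

/-! ### Main theorem -/

theorem OrdEq.restrict {n T T'} (h : OrdEq n T T') : OrdEq (n - 1) T T' := by
  intro r x y h1 h2 h3 h4 h5 h6
  rcases Nat.eq_zero_or_pos n with rfl | hn
  · exact h r x y h1 h2 h3 h4 h5 h6
  · exact h r x y h1 (by omega) (by omega) (by omega) h5 h6

theorem numGP_contrD {n w w' T} (hn : 1 ≤ n) (ar : Arr n w T) (h : IsContractionD n w w') :
    numGP (n - 1) w' = (PA (n - 1) T).ncard := by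
  obtain ⟨u, v, he, rfl⟩ := h
  obtain ⟨T1, a1, o1⟩ := ar.equiv he
  obtain ⟨T2, a2, o2⟩ := contrD hn a1
  rw [numGP_eq a2, (o1.restrict.trans o2).PA_eq]

theorem refl_word {n u v T} (ar : Arr n (u ++ ascWord n ++ v) T) :
    Arr n (reflW n u ++ descWord n ++ reflW n v) (flipT n T) := by
  have := ar.refl
  rw [← reflW_asc]
  simpa [reflW] using this

theorem reflW_reflW {n w} (h : Letters n (reflW n w)) : reflW n (reflW n w) = w := by
  unfold reflW at *
  rw [List.map_map]
  conv_rhs => rw [← List.map_id w]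
  apply List.map_congr_left
  intro a ha
  have := h (n + 1 - a) (List.mem_map.2 ⟨a, ha, rfl⟩)
  simp only [Function.comp, id]
  omega

theorem numGP_contrA {n w w' T} (hn : 1 ≤ n) (ar : Arr n w T) (h : IsContractionA n w w') :
    numGP (n - 1) w' = (PA (n - 1) (flipT n T)).ncard := by
  obtain ⟨u, v, he, rfl⟩ := h
  obtain ⟨T1, a1, o1⟩ := ar.equiv he
  have a1' := refl_word a1
  obtain ⟨T2, a2, o2⟩ := contrD hn a1'
  have e : reflW n u ++ (reflW n v).map (· - 1) = reflW (n - 1) (u.map (· - 1) ++ v) := by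
    unfold reflW
    rw [List.map_append, List.map_map, List.map_map]
    congr 1
    · apply List.map_congr_left
      intro a ha
      have := a1.lett a (by simp [ha])
      simp only [Function.comp]
      omega
    · apply List.map_congr_left
      intro a ha
      simp only [Function.comp]
      omega
  rw [e] at a2
  have a3 := a2.refl
  rw [reflW_reflW a2.lett] at a3
  rw [numGP_eq a3, PA_flip_ncard, (o1.flipped.restrict.trans o2).PA_eq]

theorem OrdEq.descent {n T T'} (o : OrdEq n T T')
    (h : ∃ m, 1 ≤ m ∧ m < n ∧ T' (n + 1) (m + 1) < T' (n + 1) m) :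
    ∃ m, 1 ≤ m ∧ m < n ∧ T (n + 1) (m + 1) < T (n + 1) m := by
  obtain ⟨m, h1, h2, h3⟩ := h
  exact ⟨m, h1, h2, (o _ _ _ (by omega) le_rfl (by omega) (by omega) (by omega) (by omega)).2 h3⟩

theorem indD_descent {n w T} (hn : 1 ≤ n) (ar : Arr n w T) (h : 0 < indD n w) :
    ∃ m, 1 ≤ m ∧ m < n ∧ T (n + 1) (m + 1) < T (n + 1) m := by
  have hne := Nat.nonempty_of_pos_sInf h
  obtain ⟨u, v, hl, he⟩ := Nat.sInf_mem hne
  obtain ⟨T1, a1, o1⟩ := ar.equiv he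
  refine o1.descent (descD hn a1 ?_)
  rintro rfl
  unfold indD at h
  rw [← hl] at h
  simp at h

theorem indA_descent {n w T} (hn : 1 ≤ n) (ar : Arr n w T) (h : 0 < indA n w) :
    ∃ m, 1 ≤ m ∧ m < n ∧ flipT n T (n + 1) (m + 1) < flipT n T (n + 1) m := by
  have hne := Nat.nonempty_of_pos_sInf h
  obtain ⟨u, v, hl, he⟩ := Nat.sInf_mem hne
  obtain ⟨T1, a1, o1⟩ := ar.equiv he
  refine o1.flipped.descent (descD hn (refl_word a1) ?_)
  intro hv
  have hv' : v = [] := by simpa [reflW] using hv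
  subst hv'
  unfold indA at h
  rw [← hl] at h
  simp at h

/-- Proposition on growth of the number of rigorous paths.
For every `i ∈ Σ_{n+1}` and `• ∈ {A, D}` one has `|GP(i)| ≥ |GP(C_•(i))| + n`;
moreover if `ind_A(i) · ind_D(i) > 0` the inequality is strict for some `•`. -/
theorem statement13 (n : ℕ) (hn : 1 ≤ n) (i : List ℕ) (hi : IsReduced n i) :
    (∀ i', IsContractionD n i i' → numGP (n - 1) i' + n ≤ numGP n i) ∧
    (∀ i', IsContractionA n i i' → numGP (n - 1) i' + n ≤ numGP n i) ∧
    (0 < indA n i * indD n i →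
      (∀ i', IsContractionD n i i' → numGP (n - 1) i' + n < numGP n i) ∨
      (∀ i', IsContractionA n i i' → numGP (n - 1) i' + n < numGP n i)) := by
  obtain ⟨T, ar⟩ := hi.arr
  have hf : numGP n i = (PA n (flipT n T)).ncard := by rw [PA_flip_ncard, numGP_eq ar]
  refine ⟨?_, ?_, ?_⟩
  · intro i' h
    rw [numGP_contrD hn ar h, numGP_eq ar]
    exact count_le ar.ax hn ar.finite
  · intro i' h
    rw [numGP_contrA hn ar h, hf]
    exact count_le ar.refl.ax hn ar.refl.finite
  · intro h
    have hA : 0 < indA n i := Nat.pos_of_mul_pos_right h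
    have hD : 0 < indD n i := Nat.pos_of_mul_pos_left h
    rcases strict_or ar.ax ar.refl.ax hn ar.finite ar.refl.finite
      (fun r s h1 h2 h3 h4 => by simp only [flipT, flip_real h1 h2, flip_real h3 h4])
      (indD_descent hn ar hD) (indA_descent hn ar hA) with h | h
    · left
      intro i' hc
      rw [numGP_contrD hn ar hc, numGP_eq ar]
      exact h
    · right
      intro i' hc
      rw [numGP_contrA hn ar hc, hf]
      exact h

end StringPolytope
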